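/- arXiv:math/0306404 — 5 statements merged into one kernel-verified Lean document; each statement's English description precedes it below -/
import Mathlib

section
/- Let M be a self-adjoint operator on a complex Hilbert space H and let (P_n) be orthogonal projections with n-dimensional ranges L_n ⊆ Dom(M²) such that P_n x → x for every x ∈ H. If λ is an isolated eigenvalue of M of finite multiplicity and condition (H) holds (for every ψ with Mψ = λψ one has ‖P_n M P_n ψ − λψ‖ → 0 and ‖P_n M² P_n ψ − λ²ψ‖ → 0 as n → ∞), then λ belongs to the uniform limiting set Λ; that is, there exist z_n ∈ Spec₂(M|L_n) with z_n → λ. -/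
open Filter Topology

noncomputable section

variable {H : Type*} [NormedAddCommGroup H] [InnerProductSpace ℂ H] [CompleteSpace H]

/-- The compression `P T |_(ran P)` of a linear operator `T` to the range of `P`. -/
def compress (P : H →L[ℂ] H) (T : H →ₗ[ℂ] H) :
    LinearMap.range (P : H →ₗ[ℂ] H) →ₗ[ℂ] LinearMap.range (P : H →ₗ[ℂ] H) :=
  LinearMap.codRestrict (LinearMap.range (P : H →ₗ[ℂ] H))
    (((P : H →ₗ[ℂ] H).comp T).comp (LinearMap.range (P : H →ₗ[ℂ] H)).subtype)
    fun c => ⟨T c, rfl⟩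

/-- `(M - z)²` as a linear map. -/
def sqz (M : H →ₗ[ℂ] H) (z : ℂ) : H →ₗ[ℂ] H :=
  (M - z • LinearMap.id) ∘ₗ (M - z • LinearMap.id)

/-- The second order spectrum of `M` relative to the range of `P`:  the set of `z ∈ ℂ` for
which the compression of `(M - z)²` to the range of `P` is not invertible. -/
def spec2 (M : H →ₗ[ℂ] H) (P : H →L[ℂ] H) : Set ℂ :=
  {z | ¬ Function.Bijective (compress P (sqz M z))}

/-- The spectrum of the (possibly unbounded) operator obtained by restricting the linear map
`M` to the subspace `D`:  the complement of the resolvent set. -/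
def pspec (D : Submodule ℂ H) (M : H →ₗ[ℂ] H) : Set ℂ :=
  {z | ¬ ∃ R : H →L[ℂ] H, (∀ x ∈ D, R (M x - z • x) = x) ∧
      ∀ y : H, R y ∈ D ∧ M (R y) - z • R y = y}

/-!
Restricted to `L = ran P`, the map `z ↦ P (M - z)² P` is a monic quadratic pencil with bounded
coefficients. If it were invertible on a whole disc `|z - λ| ≤ r`, the maximum principle applied
to its inverse would carry a lower bound `c ‖u‖ ≤ ‖P (M - z)² u‖` from the circle to the centre.
At the centre such a bound fails, since (H) gives `P (M - λ)² P ψ → 0` for eigenvectors `ψ`.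

The bound on the circle comes from splitting `u ∈ L` along `Ker (M - λ)`. By (H) the eigenvectors
are approximate eigenvectors of the adjoint `P (M - z̄)² P` with eigenvalue `(λ - z̄)²`, so the
component of `u` in `Ker (M - λ)` is controlled by `‖P (M - z)² u‖`. On the orthogonal complement
`‖(M - λ) v‖ ≥ ε ‖v‖` because `λ` is isolated, and `⟨u, (M - z)² u⟩` differs from `‖(M - λ) u‖²`
only by terms of order `r`.
-/

section HilbertSpace

variable {𝕜 E : Type*} [RCLike 𝕜] [NormedAddCommGroup E] [InnerProductSpace 𝕜 E]

lemma norm_sq_sub_le_norm_inner_sub_sub (a x y : E) :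
    ‖a‖ ^ 2 - (‖x‖ + ‖y‖) * ‖a‖ - ‖x‖ * ‖y‖ ≤ ‖inner 𝕜 (a - x) (a - y)‖ := by
  have hexpand : inner 𝕜 a a =
      inner 𝕜 (a - x) (a - y) + inner 𝕜 a y + inner 𝕜 x a - inner 𝕜 x y := by
    simp only [inner_sub_left, inner_sub_right]
    ring
  have hnorm : ‖a‖ ^ 2 ≤ ‖inner 𝕜 (a - x) (a - y)‖ + ‖a‖ * ‖y‖ + ‖x‖ * ‖a‖ + ‖x‖ * ‖y‖ := by
    calc ‖a‖ ^ 2 = ‖inner 𝕜 a a‖ := by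
          rw [inner_self_eq_norm_sq_to_K, norm_pow, RCLike.norm_ofReal, abs_norm]
      _ ≤ ‖inner 𝕜 (a - x) (a - y)‖ + ‖inner 𝕜 a y‖ + ‖inner 𝕜 x a‖ + ‖inner 𝕜 x y‖ := by
          rw [hexpand]
          exact (norm_sub_le _ _).trans (add_le_add_left norm_add₃_le _)
      _ ≤ _ := by gcongr <;> exact norm_inner_le_norm _ _
  linarith

/-- Meant for `q = A u`, `φ = A* ψ` and `ψ` the orthogonal projection of `u` onto a subspace of
approximate eigenvectors of `A*`. -/
lemma norm_mul_norm_le_of_inner_eq_inner_self {u ψ q φ : E} {w : 𝕜} {η : ℝ} (hη : 0 ≤ η)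
    (hψu : inner 𝕜 ψ u = inner 𝕜 ψ ψ) (hφ : inner 𝕜 φ u = inner 𝕜 ψ q)
    (happrox : ‖φ - starRingEnd 𝕜 w • ψ‖ ≤ η * ‖ψ‖) :
    ‖w‖ * ‖ψ‖ ≤ ‖q‖ + η * ‖u‖ := by
  rcases (norm_nonneg ψ).eq_or_lt with hψ | hψ
  · rw [← hψ, mul_zero]
    positivity
  have hexpand : w * (‖ψ‖ : 𝕜) ^ 2 = inner 𝕜 ψ q - inner 𝕜 (φ - starRingEnd 𝕜 w • ψ) u := by
    rw [inner_sub_left, inner_smul_left, RCLike.conj_conj, hψu, hφ,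
      inner_self_eq_norm_sq_to_K]
    ring
  have hnorm : ‖w‖ * ‖ψ‖ * ‖ψ‖ ≤ (‖q‖ + η * ‖u‖) * ‖ψ‖ :=
    calc ‖w‖ * ‖ψ‖ * ‖ψ‖ = ‖w * (‖ψ‖ : 𝕜) ^ 2‖ := by
          rw [norm_mul, norm_pow, RCLike.norm_ofReal, abs_norm, pow_two, mul_assoc]
      _ ≤ ‖ψ‖ * ‖q‖ + ‖φ - starRingEnd 𝕜 w • ψ‖ * ‖u‖ := by
          rw [hexpand]
          exact (norm_sub_le _ _).trans
            (add_le_add (norm_inner_le_norm _ _) (norm_inner_le_norm _ _))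
      _ ≤ ‖ψ‖ * ‖q‖ + η * ‖ψ‖ * ‖u‖ := by gcongr
      _ = (‖q‖ + η * ‖u‖) * ‖ψ‖ := by ring
  exact le_of_mul_le_mul_right hnorm hψ

end HilbertSpace

section FiniteDimensional

variable {𝕜 E F ι : Type*} [NontriviallyNormedField 𝕜] [CompleteSpace 𝕜]
  [NormedAddCommGroup E] [NormedSpace 𝕜 E] [FiniteDimensional 𝕜 E]
  [NormedAddCommGroup F] [NormedSpace 𝕜 F] {l : Filter ι}

lemma eventually_forall_norm_map_le_of_tendsto_zero {T : ι → E →ₗ[𝕜] F}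
    (hT : ∀ v, Tendsto (T · v) l (𝓝 0)) {δ : ℝ} (hδ : 0 < δ) :
    ∀ᶠ i in l, ∀ v, ‖T i v‖ ≤ δ * ‖v‖ := by
  let b := Module.finBasis 𝕜 E
  obtain ⟨C, hC, hbound⟩ := b.exists_opNorm_le (F := F)
  have hbasis : ∀ᶠ i in l, ∀ j, ‖T i (b j)‖ ≤ δ / C :=
    eventually_all.2 fun j =>
      ((tendsto_zero_iff_norm_tendsto_zero.1 (hT (b j))).eventually_le_const (by positivity))
  filter_upwards [hbasis] with i hi v
  have hop : ‖LinearMap.toContinuousLinearMap (T i)‖ ≤ C * (δ / C) := hbound (by positivity) hi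
  rw [mul_div_cancel₀ _ hC.ne'] at hop
  exact (LinearMap.toContinuousLinearMap (T i)).le_of_opNorm_le hop v

end FiniteDimensional

lemma exists_tendsto_forall_mem {X ι : Type*} [PseudoMetricSpace X] [ProperSpace X]
    {l : Filter ι} {S : ι → Set X} (hclosed : ∀ i, IsClosed (S i)) {x : X}
    (hdist : ∀ r > 0, ∀ᶠ i in l, ∃ z ∈ S i, dist z x ≤ r) :
    ∃ zs : ι → X, (∀ i, (S i).Nonempty → zs i ∈ S i) ∧ Tendsto zs l (𝓝 x) := by
  have hnearest : ∀ i, ∃ z, (S i).Nonempty → z ∈ S i ∧ Metric.infDist x (S i) = dist x z := by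
    intro i
    by_cases hi : (S i).Nonempty
    · obtain ⟨z, hz⟩ := (hclosed i).exists_infDist_eq_dist hi x
      exact ⟨z, fun _ => hz⟩
    · exact ⟨x, fun h => absurd h hi⟩
  choose zs hzs using hnearest
  refine ⟨zs, fun i hi => (hzs i hi).1, Metric.tendsto_nhds.2 fun r hr => ?_⟩
  filter_upwards [hdist (r / 2) (half_pos hr)] with i ⟨z, hz, hzr⟩
  calc dist (zs i) x = Metric.infDist x (S i) := by rw [dist_comm, (hzs i ⟨z, hz⟩).2]
    _ ≤ dist z x := by rw [dist_comm]; exact Metric.infDist_le_dist_of_mem hz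
    _ < r := by linarith

lemma mul_norm_le_norm_apply_of_forall_mem_frontier {E V : Type*}
    [NormedAddCommGroup E] [NormedSpace ℂ E] [Nontrivial E]
    [NormedAddCommGroup V] [NormedSpace ℂ V] [CompleteSpace V]
    {U : Set E} (hU : Bornology.IsBounded U) {A : E → V →L[ℂ] V} (hA : DiffContOnCl ℂ A U)
    (hunit : ∀ z ∈ closure U, IsUnit (A z)) {c : ℝ} (hc : 0 < c)
    (hlow : ∀ z ∈ frontier U, ∀ v, c * ‖v‖ ≤ ‖A z v‖) {z : E} (hz : z ∈ closure U) (v : V) :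
    c * ‖v‖ ≤ ‖A z v‖ := by
  -- Maximum principle for `w ↦ (A w)⁻¹ (A z v)`, which takes the value `v` at `z`.
  have hinv : DiffContOnCl ℂ (fun w => Ring.inverse (A w) (A z v)) U :=
    ⟨(hA.differentiableOn.inverse fun w hw => hunit w (subset_closure hw)).clm_apply
        (differentiableOn_const _),
      (ContinuousOn.clm_apply (fun w hw =>
        ((differentiableAt_inverse (𝕜 := ℂ) (hunit w hw)).continuousAt.comp_continuousWithinAt
          (hA.continuousOn w hw))) continuousOn_const)⟩
  have hright : ∀ w ∈ closure U, ∀ x, A w (Ring.inverse (A w) x) = x := fun w hw x =>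
    DFunLike.congr_fun (Ring.mul_inverse_cancel _ (hunit w hw)) x
  have hleft : Ring.inverse (A z) (A z v) = v :=
    DFunLike.congr_fun (Ring.inverse_mul_cancel _ (hunit z hz)) v
  have hfrontier : ∀ w ∈ frontier U, ‖Ring.inverse (A w) (A z v)‖ ≤ ‖A z v‖ / c := by
    intro w hw
    have hlow_w := hlow w hw (Ring.inverse (A w) (A z v))
    rwa [hright w (frontier_subset_closure hw), mul_comm, ← le_div_iff₀ hc] at hlow_w
  have hmax := Complex.norm_le_of_forall_mem_frontier_norm_le hU hinv hfrontier hz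
  rwa [hleft, le_div_iff₀ hc, mul_comm] at hmax

section QuadraticPencil

variable {A : Type*} [NormedRing A] [NormedAlgebra ℂ A]

/-- The monic quadratic pencil `a + z b + z²` with coefficients in a normed algebra; the
compressions of `(M - z)²` are of this form. -/
def quadraticPencil (a b : A) (z : ℂ) : A :=
  a + z • b + z ^ 2 • (1 : A)

lemma differentiable_quadraticPencil (a b : A) : Differentiable ℂ (quadraticPencil a b) := by
  unfold quadraticPencil
  fun_prop

lemma exists_not_isUnit_quadraticPencil [CompleteSpace A] [Nontrivial A] (a b : A) :
    ∃ z, ¬ IsUnit (quadraticPencil a b z) := by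
  by_contra! hunit
  -- The inverse would be entire and vanish at infinity, contradicting Liouville's theorem.
  have hdiff : Differentiable ℂ fun z => Ring.inverse (quadraticPencil a b z) :=
    fun z => (differentiable_quadraticPencil a b z).inverse (hunit z)
  have hrecip : ∀ z ≠ 0, Ring.inverse (quadraticPencil a b z) =
      z⁻¹ ^ 2 • Ring.inverse (z⁻¹ ^ 2 • a + z⁻¹ • b + 1) := by
    intro z hz
    set c := z⁻¹ ^ 2 • a + z⁻¹ • b + 1 with hc
    have hfactor : quadraticPencil a b z = z ^ 2 • c := by
      rw [quadraticPencil, hc, smul_add, smul_add, smul_smul, smul_smul,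
        show z ^ 2 * z⁻¹ ^ 2 = 1 by field_simp, show z ^ 2 * z⁻¹ = z by field_simp, one_smul]
    have hc_unit : IsUnit c :=
      (isUnit_smul_iff (Units.mk0 z hz ^ 2) c).1 (hfactor ▸ hunit z)
    refine left_inv_eq_right_inv (Ring.inverse_mul_cancel _ (hunit z)) ?_
    rw [hfactor, smul_mul_smul_comm, Ring.mul_inverse_cancel _ hc_unit, ← mul_pow,
      mul_inv_cancel₀ hz, one_pow, one_smul]
  have hreversed : Tendsto (fun w : ℂ => w ^ 2 • Ring.inverse (w ^ 2 • a + w • b + 1))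
      (𝓝 0) (𝓝 0) := by
    have hcont : ContinuousAt (fun w : ℂ => w ^ 2 • Ring.inverse (w ^ 2 • a + w • b + 1)) 0 :=
      (DifferentiableAt.fun_smul (𝕜 := ℂ) (by fun_prop)
        (DifferentiableAt.inverse (by fun_prop) (by simp))).continuousAt
    simpa using hcont.tendsto
  have hlim : Tendsto (fun z => Ring.inverse (quadraticPencil a b z)) (cocompact ℂ) (𝓝 0) := by
    rw [← Metric.cobounded_eq_cocompact]
    refine (hreversed.comp tendsto_inv₀_cobounded).congr' ?_
    filter_upwards [Bornology.eventually_ne_cobounded (0 : ℂ)] with z hz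
    exact (hrecip z hz).symm
  have hzero := hdiff.apply_eq_of_tendsto_cocompact 0 hlim
  exact not_isUnit_zero (hzero ▸ (hunit 0).ringInverse)

end QuadraticPencil

section FunctionalCalculus

lemma norm_cfc_apply_sq (A : H →L[ℂ] H) {f : ℝ → ℝ} (hf : ContinuousOn f (spectrum ℝ A))
    (v : H) : ‖cfc f A v‖ ^ 2 = RCLike.re (inner ℂ (cfc (fun t => f t * f t) A v) v) := by
  have hfsa : IsSelfAdjoint (cfc f A) := cfc_predicate f A
  rw [cfc_mul f f A, mul_apply_eq_comp, ← ContinuousLinearMap.adjoint_inner_right,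
    hfsa.adjoint_eq, norm_sq_eq_re_inner (𝕜 := ℂ)]

lemma norm_cfc_apply_le_norm_cfc_apply {A : H →L[ℂ] H} {f g : ℝ → ℝ}
    (hf : ContinuousOn f (spectrum ℝ A)) (hg : ContinuousOn g (spectrum ℝ A))
    (hgf : ∀ t ∈ spectrum ℝ A, |g t| ≤ |f t|) (v : H) :
    ‖cfc g A v‖ ≤ ‖cfc f A v‖ := by
  have hmono : cfc (fun t => g t * g t) A ≤ cfc (fun t => f t * f t) A :=
    cfc_mono (fun t ht => abs_le_iff_mul_self_le.1 (hgf t ht)) (hg.mul hg) (hf.mul hf)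
  have hpos := (ContinuousLinearMap.le_def _ _ |>.1 hmono).re_inner_nonneg_left v
  rw [sub_apply, inner_sub_left, map_sub, sub_nonneg, ← norm_cfc_apply_sq A hg,
    ← norm_cfc_apply_sq A hf] at hpos
  exact le_of_sq_le_sq hpos (norm_nonneg _)

lemma norm_cfc_apply_le_of_mem_orthogonal_ker {A : H →L[ℂ] H} {f g : ℝ → ℝ}
    (hf : ContinuousOn f (spectrum ℝ A)) (hg : ContinuousOn g (spectrum ℝ A))
    (hgf : ∀ t ∈ spectrum ℝ A, f t ≠ 0 → |g t| ≤ |f t|) {v : H} (hv : v ∈ (cfc f A).kerᗮ) :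
    ‖cfc g A v‖ ≤ ‖cfc f A v‖ := by
  have hrange : ∀ w, ‖cfc g A (cfc f A w)‖ ≤ ‖cfc f A (cfc f A w)‖ := by
    intro w
    rw [← mul_apply_eq_comp, ← mul_apply_eq_comp, ← cfc_mul g f A, ← cfc_mul f f A]
    refine norm_cfc_apply_le_norm_cfc_apply (hf.mul hf) (hg.mul hf) (fun t ht => ?_) w
    simp only [Pi.mul_apply, abs_mul]
    rcases eq_or_ne (f t) 0 with hft | hft
    · simp [hft]
    · exact mul_le_mul_of_nonneg_right (hgf t ht hft) (abs_nonneg _)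
  have hclosure : v ∈ closure (Set.range ⇑(cfc f A)) := by
    have hfsa : IsSelfAdjoint (cfc f A) := cfc_predicate f A
    rw [ContinuousLinearMap.orthogonal_ker, hfsa.adjoint_eq] at hv
    exact hv
  have hclosed : IsClosed {w | ‖cfc g A w‖ ≤ ‖cfc f A w‖} :=
    isClosed_le (by fun_prop) (by fun_prop)
  exact closure_minimal (Set.range_subset_iff.2 hrange) hclosed hclosure

end FunctionalCalculus

section Resolvent

variable {𝕜 E : Type*} [NontriviallyNormedField 𝕜] [NormedAddCommGroup E] [NormedSpace 𝕜 E]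

/-- The bounded operator `R` is the resolvent `(M - z)⁻¹` of the operator `M` with domain `D`;
`M` is given as a linear map on the whole space, of which only the values on `D` matter. -/
def IsResolventAt (D : Submodule 𝕜 E) (M : E →ₗ[𝕜] E) (z : 𝕜) (R : E →L[𝕜] E) : Prop :=
  (∀ x ∈ D, R (M x - z • x) = x) ∧ ∀ y, R y ∈ D ∧ M (R y) - z • R y = y

namespace IsResolventAt

variable {D : Submodule 𝕜 E} {M : E →ₗ[𝕜] E} {z w : 𝕜} {R Z : E →L[𝕜] E}

lemma sub_eq_smul_mul (hR : IsResolventAt D M z R) (hZ : IsResolventAt D M w Z) :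
    R - Z = (z - w) • (R * Z) := by
  ext y
  have hZy : R (M (Z y) - z • Z y) = Z y := hR.1 _ (hZ.2 y).1
  have hMZ : M (Z y) - z • Z y = y - (z - w) • Z y :=
    calc M (Z y) - z • Z y = (M (Z y) - w • Z y) - (z - w) • Z y := by module
      _ = y - (z - w) • Z y := by rw [(hZ.2 y).2]
  rw [hMZ, map_sub, map_smul] at hZy
  rw [sub_apply, smul_apply, mul_apply_eq_comp, sub_eq_iff_eq_add, ← sub_eq_iff_eq_add', hZy]

lemma isUnit_algebraMap_sub (hR : IsResolventAt D M z R) {t : 𝕜} (ht : t ≠ 0)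
    (hZ : IsResolventAt D M (z + t⁻¹) Z) : IsUnit (algebraMap 𝕜 (E →L[𝕜] E) t - R) := by
  have hRZ : R * Z = t • (Z - R) := by
    rw [← neg_sub R Z, hR.sub_eq_smul_mul hZ, sub_add_cancel_left, neg_smul, neg_neg,
      smul_inv_smul₀ ht]
  have hZR : Z * R = t • (Z - R) := by
    rw [hZ.sub_eq_smul_mul hR, add_sub_cancel_left, smul_inv_smul₀ ht]
  refine ⟨⟨_, t⁻¹ • (1 + t⁻¹ • Z), ?_, ?_⟩, rfl⟩
  · simp only [Algebra.algebraMap_eq_smul_one, sub_mul, mul_smul_comm, smul_mul_assoc, mul_add,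
      one_mul, mul_one, hRZ]
    match_scalars <;> field_simp <;> ring
  · simp only [Algebra.algebraMap_eq_smul_one, mul_sub, mul_smul_comm, smul_mul_assoc, add_mul,
      one_mul, mul_one, hZR]
    match_scalars <;> field_simp <;> ring

end IsResolventAt

end Resolvent

section UnboundedOperators

variable {E : Type*} [NormedAddCommGroup E] [InnerProductSpace ℂ E]

lemma IsResolventAt.add_inv_mem_pspec {D : Submodule ℂ E} {M : E →ₗ[ℂ] E} {z t : ℂ}
    {R : E →L[ℂ] E} (hR : IsResolventAt D M z R) (ht : t ≠ 0) (htR : t ∈ spectrum ℂ R) :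
    z + t⁻¹ ∈ pspec D M :=
  fun ⟨_, hZ⟩ => htR (hR.isUnit_algebraMap_sub ht hZ)

/-- `M` is symmetric as an operator with domain `D`. -/
def IsSymmetricOn (D : Submodule ℂ E) (M : E →ₗ[ℂ] E) : Prop :=
  ∀ u ∈ D, ∀ v ∈ D, inner ℂ (M u) v = inner ℂ u (M v)

/-- The eigenspace `Ker (M - z)` of `M` as an operator with domain `D`. -/
def domEigenspace (D : Submodule ℂ E) (M : E →ₗ[ℂ] E) (z : ℂ) : Submodule ℂ E :=
  D ⊓ LinearMap.ker (M - z • LinearMap.id)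

lemma mem_domEigenspace {D : Submodule ℂ E} {M : E →ₗ[ℂ] E} {z : ℂ} {ψ : E} :
    ψ ∈ domEigenspace D M z ↔ ψ ∈ D ∧ M ψ = z • ψ := by
  simp only [domEigenspace, Submodule.mem_inf, LinearMap.mem_ker, LinearMap.sub_apply,
    LinearMap.smul_apply, LinearMap.id_apply, sub_eq_zero]

lemma IsSymmetricOn.inner_sub_smul_left {D : Submodule ℂ E} {M : E →ₗ[ℂ] E}
    (hM : IsSymmetricOn D M) (z : ℂ) {a b : E} (ha : a ∈ D) (hb : b ∈ D) :
    inner ℂ (M a - starRingEnd ℂ z • a) b = inner ℂ a (M b - z • b) := by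
  rw [inner_sub_left, inner_sub_right, inner_smul_left, inner_smul_right, hM a ha b hb,
    Complex.conj_conj]

lemma IsResolventAt.isSymmetric {D : Submodule ℂ E} {M : E →ₗ[ℂ] E} {x : ℝ} {R : E →L[ℂ] E}
    (hR : IsResolventAt D M x R) (hM : IsSymmetricOn D M) : R.IsSymmetric := by
  intro a b
  have h := hM.inner_sub_smul_left x (hR.2 a).1 (hR.2 b).1
  rw [Complex.conj_ofReal, (hR.2 a).2, (hR.2 b).2] at h
  exact h.symm

lemma IsResolventAt.mem_domEigenspace_of_add_smul_eq_zero {D : Submodule ℂ E} {M : E →ₗ[ℂ] E}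
    {z l : ℂ} {R : E →L[ℂ] E} (hR : IsResolventAt D M z R) {e : E} (he : e + (z - l) • R e = 0) :
    e ∈ domEigenspace D M l := by
  have hRe : R e ∈ domEigenspace D M l := by
    refine mem_domEigenspace.2 ⟨(hR.2 e).1, ?_⟩
    calc M (R e) = (M (R e) - z • R e) + z • R e := by module
      _ = (e + (z - l) • R e) + l • R e := by rw [(hR.2 e).2]; module
      _ = l • R e := by rw [he, zero_add]
  rw [eq_neg_of_add_eq_zero_left he]
  exact neg_mem (Submodule.smul_mem _ _ hRe)

lemma IsResolventAt.abs_mul_le_of_mem_spectrum {D : Submodule ℂ E} {M : E →ₗ[ℂ] E}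
    {x l ε : ℝ} {R : E →L[ℂ] E} (hR : IsResolventAt D M x R)
    (hgap : ∀ z ∈ pspec D M, z ≠ (l : ℂ) → ε ≤ ‖z - (l : ℂ)‖) {t : ℝ}
    (ht : t ∈ spectrum ℝ R) (hne : 1 + (x - l) * t ≠ 0) : ε * |t| ≤ |1 + (x - l) * t| := by
  rcases eq_or_ne t 0 with rfl | ht0
  · simp
  have hfactor : 1 + (x - l) * t = (x + t⁻¹ - l) * t := by field_simp; ring
  have hmem : ((x + t⁻¹ : ℝ) : ℂ) ∈ pspec D M := by
    push_cast
    exact hR.add_inv_mem_pspec (by exact_mod_cast ht0)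
      (spectrum.algebraMap_mem ℂ ht)
  have hdist : ε ≤ |x + t⁻¹ - l| := by
    have h := hgap _ hmem fun heq => hne <| by
      rw [hfactor, Complex.ofReal_injective heq, sub_self, zero_mul]
    rwa [← Complex.ofReal_sub, Complex.norm_real, Real.norm_eq_abs] at h
  rw [hfactor, abs_mul]
  gcongr

lemma sqz_apply (M : E →ₗ[ℂ] E) (z : ℂ) (u : E) :
    sqz M z u = M (M u - z • u) - z • (M u - z • u) :=
  rfl

lemma sqz_eq_comp_sub_add (M : E →ₗ[ℂ] E) (z : ℂ) :
    sqz M z = M ∘ₗ M - (2 * z) • M + z ^ 2 • LinearMap.id := by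
  ext u
  simp only [sqz_apply, map_sub, map_smul, LinearMap.add_apply, LinearMap.sub_apply,
    LinearMap.comp_apply, LinearMap.smul_apply, LinearMap.id_apply]
  module

/-- The domain `Dom(M²)` of the square of `M` as an operator with domain `D`. -/
def domSq (D : Submodule ℂ E) (M : E →ₗ[ℂ] E) : Submodule ℂ E :=
  D ⊓ D.comap M

namespace IsSymmetricOn

variable {D : Submodule ℂ E} {M : E →ₗ[ℂ] E} (hM : IsSymmetricOn D M)
include hM

lemma comp_self : IsSymmetricOn (domSq D M) (M ∘ₗ M) := fun u hu v hv => by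
  rw [LinearMap.comp_apply, LinearMap.comp_apply, hM _ hu.2 v hv.1, hM u hu.1 _ hv.2]

lemma inner_sqz_right (z : ℂ) {a b : E} (ha : a ∈ D) (hb : b ∈ domSq D M) :
    inner ℂ a (sqz M z b) = inner ℂ (M a - starRingEnd ℂ z • a) (M b - z • b) := by
  rw [sqz_apply, hM.inner_sub_smul_left z ha (D.sub_mem hb.2 (D.smul_mem z hb.1))]

lemma inner_sqz_left (z : ℂ) {a b : E} (ha : a ∈ domSq D M) (hb : b ∈ domSq D M) :
    inner ℂ (sqz M (starRingEnd ℂ z) a) b = inner ℂ a (sqz M z b) := by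
  rw [hM.inner_sqz_right z ha.1 hb, sqz_apply,
    hM.inner_sub_smul_left z (D.sub_mem ha.2 (D.smul_mem _ ha.1)) hb.1]

lemma mono {D₁ : Submodule ℂ E} (h : D₁ ≤ D) : IsSymmetricOn D₁ M :=
  fun u hu v hv => hM u (h hu) v (h hv)

end IsSymmetricOn

lemma apply_eq_self_of_mem_range {P : E →L[ℂ] E} (hP : IsIdempotentElem P) {u : E}
    (hu : u ∈ P.range) : P u = u :=
  (LinearMap.IsIdempotentElem.mem_range_iff
    (ContinuousLinearMap.IsIdempotentElem.toLinearMap hP)).1 hu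

lemma mul_norm_sub_starProjection_domEigenspace_le {D : Submodule ℂ E} {M : E →ₗ[ℂ] E} {l : ℂ}
    {γ : ℝ} [(domEigenspace D M l).HasOrthogonalProjection]
    (hgap : ∀ v ∈ D, v ∈ (domEigenspace D M l)ᗮ → γ * ‖v‖ ≤ ‖M v - l • v‖) {u : E}
    (hu : u ∈ D) :
    γ * ‖u - (domEigenspace D M l).starProjection u‖ ≤ ‖M u - l • u‖ := by
  set ψ := (domEigenspace D M l).starProjection u
  obtain ⟨hψD, hMψ⟩ := mem_domEigenspace.1 ((domEigenspace D M l).starProjection_apply_mem u)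
  have h := hgap (u - ψ) (D.sub_mem hu hψD) (Submodule.sub_starProjection_mem_orthogonal u)
  rwa [map_sub, hMψ, smul_sub, sub_sub_sub_cancel_right] at h

end UnboundedOperators

section SpectralGap

lemma cfc_one_add_mul_apply {R : H →L[ℂ] H} (hR : IsSelfAdjoint R) (c : ℝ) (y : H) :
    cfc (fun t => 1 + c * t) R y = y + (c : ℂ) • R y := by
  rw [cfc_const_add 1 (fun t => c * t) R, cfc_const_mul_id c R, map_one, add_apply,
    one_apply_eq_self, smul_apply, Complex.coe_smul]

lemma mul_norm_le_norm_apply_sub_smul_of_mem_orthogonal {D : Submodule ℂ H} {M : H →ₗ[ℂ] H}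
    (hM : IsSymmetricOn D M) {l ε : ℝ} (hε : 0 < ε)
    (hgap : ∀ z ∈ pspec D M, z ≠ (l : ℂ) → ε ≤ ‖z - (l : ℂ)‖) {v : H} (hvD : v ∈ D)
    (hv : v ∈ (domEigenspace D M (l : ℂ))ᗮ) : ε * ‖v‖ ≤ ‖M v - (l : ℂ) • v‖ := by
  obtain ⟨x, hx⟩ : ∃ x : ℝ, (x : ℂ) ∉ pspec D M := by
    refine ⟨l + ε / 2, fun hmem => ?_⟩
    have h := hgap _ hmem (by norm_cast; linarith)
    rw [← Complex.ofReal_sub, Complex.norm_real, add_sub_cancel_left,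
      Real.norm_of_nonneg (by positivity)] at h
    linarith
  obtain ⟨R, hR⟩ : ∃ R, IsResolventAt D M x R := not_not.1 hx
  have hRsa : IsSelfAdjoint R :=
    ContinuousLinearMap.isSelfAdjoint_iff_isSymmetric.2 (hR.isSymmetric hM)
  -- `v = R y` and `(M - l) v = (1 + (x - l) R) y`: compare two functions of `R` at `y`.
  set y := M v - (x : ℂ) • v with hy
  have hRy : R y = v := hR.1 v hvD
  have hy_orth : y ∈ (cfc (fun t => 1 + (x - l) * t) R).kerᗮ := by
    rw [Submodule.mem_orthogonal]
    intro e he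
    have he0 : cfc (fun t => 1 + (x - l) * t) R e = 0 := he
    rw [cfc_one_add_mul_apply hRsa, Complex.ofReal_sub] at he0
    have heig := hR.mem_domEigenspace_of_add_smul_eq_zero he0
    obtain ⟨heD, hMe⟩ := mem_domEigenspace.1 heig
    have hsymm := hM.inner_sub_smul_left x heD hvD
    rw [← hsymm, hMe, Complex.conj_ofReal, ← sub_smul, inner_smul_left,
      (Submodule.mem_orthogonal _ _).1 hv e heig, mul_zero]
  have hcfc := norm_cfc_apply_le_of_mem_orthogonal_ker (f := fun t => 1 + (x - l) * t)
    (g := fun t => ε * t) (A := R) (by fun_prop) (by fun_prop) (fun t ht hft => by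
      rw [abs_mul, abs_of_pos hε]
      exact hR.abs_mul_le_of_mem_spectrum hgap ht hft) hy_orth
  rw [cfc_const_mul_id ε R, smul_apply, norm_smul, Real.norm_of_nonneg hε.le,
    cfc_one_add_mul_apply hRsa, hRy] at hcfc
  convert hcfc using 2
  rw [hy, Complex.ofReal_sub]
  module

end SpectralGap

section Compression

variable {D : Submodule ℂ H} {M : H →ₗ[ℂ] H} {P : H →L[ℂ] H}

lemma completeSpace_range (hP : IsIdempotentElem P) : CompleteSpace P.range :=
  (ContinuousLinearMap.IsIdempotentElem.isClosed_range hP).completeSpace_coe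

lemma inner_apply_left_of_isStarProjection (hP : IsStarProjection P) (u v : H) :
    inner ℂ (P u) v = inner ℂ u (P v) :=
  hP.isSelfAdjoint.isSymmetric u v

lemma isSymmetric_compress (hP : IsStarProjection P) {T : H →ₗ[ℂ] H}
    (hT : IsSymmetricOn P.range T) : (compress P T).IsSymmetric := by
  intro u v
  calc inner ℂ (P (T u)) (v : H) = inner ℂ (T u) (v : H) := by
        rw [inner_apply_left_of_isStarProjection hP,
          apply_eq_self_of_mem_range hP.isIdempotentElem v.2]
    _ = inner ℂ (u : H) (T v) := hT u u.2 v v.2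
    _ = inner ℂ (u : H) (P (T v)) := by
        rw [← inner_apply_left_of_isStarProjection hP,
          apply_eq_self_of_mem_range hP.isIdempotentElem u.2]

lemma continuous_compress (hP : IsStarProjection P) {T : H →ₗ[ℂ] H}
    (hT : IsSymmetricOn P.range T) : Continuous (compress P T) :=
  have : CompleteSpace P.range := completeSpace_range hP.isIdempotentElem
  (isSymmetric_compress hP hT).continuous

lemma exists_quadraticPencil_spec2_eq (hP : IsStarProjection P) (hM : IsSymmetricOn D M)
    (hdom : P.range ≤ domSq D M) :
    ∃ A B : P.range →L[ℂ] P.range,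
      (∀ z u, (quadraticPencil A B z u : H) = P (sqz M z u)) ∧
      spec2 M P = {z | ¬ IsUnit (quadraticPencil A B z)} := by
  have : CompleteSpace P.range := completeSpace_range hP.isIdempotentElem
  let A : P.range →L[ℂ] P.range :=
    ⟨compress P (M ∘ₗ M), continuous_compress hP (hM.comp_self.mono hdom)⟩
  let B : P.range →L[ℂ] P.range :=
    ⟨compress P M, continuous_compress hP (hM.mono (hdom.trans inf_le_left))⟩
  have happly : ∀ z u, (quadraticPencil A ((-2 : ℂ) • B) z u : H) = P (sqz M z u) := by
    intro z u
    have hAu : (A u : H) = P (M (M u)) := rfl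
    have hBu : (B u : H) = P (M u) := rfl
    simp only [quadraticPencil, add_apply, smul_apply, one_apply_eq_self, Submodule.coe_add,
      Submodule.coe_smul, hAu, hBu, sqz_eq_comp_sub_add, LinearMap.add_apply,
      LinearMap.sub_apply, LinearMap.smul_apply, LinearMap.comp_apply, LinearMap.id_apply,
      map_add, map_sub, map_smul,
      apply_eq_self_of_mem_range hP.isIdempotentElem u.2]
    module
  refine ⟨A, (-2 : ℂ) • B, happly, Set.ext fun z => not_congr ?_⟩
  rw [ContinuousLinearMap.isUnit_iff_bijective]
  exact iff_of_eq (congr_arg _ (funext fun u => Subtype.ext (happly z u).symm))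

lemma isClosed_spec2 (hP : IsStarProjection P) (hM : IsSymmetricOn D M)
    (hdom : P.range ≤ domSq D M) : IsClosed (spec2 M P) := by
  have : CompleteSpace P.range := completeSpace_range hP.isIdempotentElem
  obtain ⟨A, B, -, hspec⟩ := exists_quadraticPencil_spec2_eq hP hM hdom
  rw [hspec]
  exact nonunits.isClosed.preimage (differentiable_quadraticPencil A B).continuous

lemma spec2_nonempty (hP : IsStarProjection P) (hM : IsSymmetricOn D M)
    (hdom : P.range ≤ domSq D M) (hne : P ≠ 0) : (spec2 M P).Nonempty := by
  have : CompleteSpace P.range := completeSpace_range hP.isIdempotentElem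
  have : Nontrivial P.range := by
    rw [Submodule.nontrivial_iff_ne_bot, Ne, LinearMap.range_eq_bot]
    exact fun h => hne (ContinuousLinearMap.coe_inj.1 h)
  obtain ⟨A, B, -, hspec⟩ := exists_quadraticPencil_spec2_eq hP hM hdom
  rw [hspec]
  exact exists_not_isUnit_quadraticPencil A B

lemma exists_mem_spec2_dist_le_of_norm_apply_lt (hP : IsStarProjection P)
    (hM : IsSymmetricOn D M) (hdom : P.range ≤ domSq D M) {z₀ : ℂ} {r c : ℝ} (hr : 0 < r)
    (hc : 0 < c) (hsphere : ∀ z ∈ Metric.sphere z₀ r, ∀ u ∈ P.range, c * ‖u‖ ≤ ‖P (sqz M z u)‖)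
    {u : H} (hu : u ∈ P.range) (hlt : ‖P (sqz M z₀ u)‖ < c * ‖u‖) :
    ∃ z ∈ spec2 M P, dist z z₀ ≤ r := by
  have : CompleteSpace P.range := completeSpace_range hP.isIdempotentElem
  obtain ⟨A, B, happly, hspec⟩ := exists_quadraticPencil_spec2_eq hP hM hdom
  by_contra! hnone
  have hunit : ∀ z ∈ closure (Metric.ball z₀ r), IsUnit (quadraticPencil A B z) := by
    intro z hz
    by_contra hz'
    exact (hnone z (hspec ▸ hz')).not_ge (Metric.closure_ball_subset_closedBall hz)
  have hfrontier : ∀ z ∈ frontier (Metric.ball z₀ r), ∀ v : P.range,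
      c * ‖v‖ ≤ ‖quadraticPencil A B z v‖ := by
    intro z hz v
    rw [Submodule.coe_norm, Submodule.coe_norm, happly]
    exact hsphere z (Metric.frontier_ball_subset_sphere hz) v v.2
  have hcenter := mul_norm_le_norm_apply_of_forall_mem_frontier Metric.isBounded_ball
    (differentiable_quadraticPencil A B).diffContOnCl hunit hc hfrontier
    (subset_closure (Metric.mem_ball_self hr)) ⟨u, hu⟩
  rw [Submodule.coe_norm, Submodule.coe_norm, happly] at hcenter
  exact hlt.not_ge hcenter

end Compression

section LowerBound

variable {D : Submodule ℂ H} {M : H →ₗ[ℂ] H} {P : H →L[ℂ] H}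

lemma norm_conj_sub_ofReal (z : ℂ) (l : ℝ) : ‖starRingEnd ℂ z - l‖ = ‖z - l‖ := by
  rw [← Complex.norm_conj (z - l), map_sub, Complex.conj_ofReal]

lemma norm_sub_sq_mul_norm_starProjection_le (hP : IsStarProjection P) (hM : IsSymmetricOn D M)
    (hdom : P.range ≤ domSq D M) (K : Submodule ℂ H) [K.HasOrthogonalProjection] {l : ℝ} {z : ℂ}
    {η : ℝ} (hη : 0 ≤ η)
    (happrox : ∀ ψ ∈ K,
      ‖P (sqz M (starRingEnd ℂ z) (P ψ)) - ((l : ℂ) - starRingEnd ℂ z) ^ 2 • ψ‖ ≤ η * ‖ψ‖)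
    {u : H} (hu : u ∈ P.range) :
    ‖z - l‖ ^ 2 * ‖K.starProjection u‖ ≤ ‖P (sqz M z u)‖ + η * ‖u‖ := by
  set ψ := K.starProjection u
  have hψK : ψ ∈ K := K.starProjection_apply_mem u
  have hψu : inner ℂ ψ u = inner ℂ ψ ψ := by
    simpa only [K.starProjection_eq_self_iff.2 hψK] using
      K.inner_starProjection_left_eq_right ψ u
  have hPψ : P ψ ∈ domSq D M := hdom ⟨ψ, rfl⟩
  have hφ : inner ℂ (P (sqz M (starRingEnd ℂ z) (P ψ))) u = inner ℂ ψ (P (sqz M z u)) :=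
    calc _ = inner ℂ (sqz M (starRingEnd ℂ z) (P ψ)) u := by
          rw [inner_apply_left_of_isStarProjection hP,
            apply_eq_self_of_mem_range hP.isIdempotentElem hu]
      _ = inner ℂ ψ (P (sqz M z u)) := by
          rw [hM.inner_sqz_left z hPψ (hdom hu), inner_apply_left_of_isStarProjection hP]
  have h := norm_mul_norm_le_of_inner_eq_inner_self (w := ((l : ℂ) - z) ^ 2) hη hψu hφ (by
    simpa only [map_pow, map_sub, Complex.conj_ofReal] using happrox ψ hψK)
  rwa [norm_pow, norm_sub_rev] at h

lemma norm_sq_sub_le_norm_mul_norm_apply_sqz (hP : IsStarProjection P) (hM : IsSymmetricOn D M)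
    (hdom : P.range ≤ domSq D M) (l : ℝ) (z : ℂ) {u : H} (hu : u ∈ P.range) :
    ‖M u - (l : ℂ) • u‖ ^ 2 - 2 * ‖z - l‖ * ‖u‖ * ‖M u - (l : ℂ) • u‖ - (‖z - l‖ * ‖u‖) ^ 2 ≤
      ‖u‖ * ‖P (sqz M z u)‖ := by
  have hinner : inner ℂ u (P (sqz M z u)) =
      inner ℂ (M u - (l : ℂ) • u - (starRingEnd ℂ z - l) • u)
        (M u - (l : ℂ) • u - (z - l) • u) := by
    rw [← inner_apply_left_of_isStarProjection hP,
      apply_eq_self_of_mem_range hP.isIdempotentElem hu,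
      hM.inner_sqz_right z (hdom hu).1 (hdom hu)]
    congr 1 <;> module
  have hlow := norm_sq_sub_le_norm_inner_sub_sub (𝕜 := ℂ) (M u - (l : ℂ) • u)
    ((starRingEnd ℂ z - l) • u) ((z - l) • u)
  rw [← hinner, norm_smul, norm_smul, norm_conj_sub_ofReal] at hlow
  linarith [norm_inner_le_norm (𝕜 := ℂ) u (P (sqz M z u))]

lemma half_sq_mul_norm_le_norm_apply_sqz (hP : IsStarProjection P) (hM : IsSymmetricOn D M)
    (hdom : P.range ≤ domSq D M) {l γ r : ℝ} [(domEigenspace D M (l : ℂ)).HasOrthogonalProjection]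
    (hgap : ∀ v ∈ D, v ∈ (domEigenspace D M (l : ℂ))ᗮ → γ * ‖v‖ ≤ ‖M v - (l : ℂ) • v‖)
    (hr : 0 < r) (hrγ : 8 * r ≤ γ)
    (happrox : ∀ z ∈ Metric.closedBall (l : ℂ) r, ∀ ψ ∈ domEigenspace D M (l : ℂ),
      ‖P (sqz M z (P ψ)) - ((l : ℂ) - z) ^ 2 • ψ‖ ≤ r ^ 2 / 8 * ‖ψ‖)
    {z : ℂ} (hz : z ∈ Metric.sphere (l : ℂ) r) {u : H} (hu : u ∈ P.range) :
    r ^ 2 / 2 * ‖u‖ ≤ ‖P (sqz M z u)‖ := by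
  have hzr : ‖z - l‖ = r := mem_sphere_iff_norm.1 hz
  have hconj : starRingEnd ℂ z ∈ Metric.closedBall (l : ℂ) r := by
    rw [mem_closedBall_iff_norm, norm_conj_sub_ofReal, hzr]
  have hdistψ := mul_norm_sub_starProjection_domEigenspace_le hgap (hdom hu).1
  have hψ := norm_sub_sq_mul_norm_starProjection_le hP hM hdom (domEigenspace D M (l : ℂ))
    (by positivity) (happrox _ hconj) hu
  have hquad := norm_sq_sub_le_norm_mul_norm_apply_sqz hP hM hdom l z hu
  rw [hzr] at hψ hquad
  set ψ := (domEigenspace D M (l : ℂ)).starProjection u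
  set a := ‖M u - (l : ℂ) • u‖
  set q := ‖P (sqz M z u)‖
  have htri : ‖u‖ ≤ ‖ψ‖ + ‖u - ψ‖ := by
    simpa only [add_sub_cancel] using norm_add_le ψ (u - ψ)
  by_contra! hq
  have hψ_small : ‖ψ‖ < 5 / 8 * ‖u‖ := by
    refine lt_of_mul_lt_mul_left ?_ (sq_nonneg r)
    linarith
  have ha : 3 * r * ‖u‖ ≤ a :=
    calc 3 * r * ‖u‖ = 8 * r * (3 / 8 * ‖u‖) := by ring
      _ ≤ 8 * r * ‖u - ψ‖ := by
          gcongr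
          linarith
      _ ≤ γ * ‖u - ψ‖ := by gcongr
      _ ≤ a := hdistψ
  have hu0 : 0 < ‖u‖ := by linarith [norm_nonneg ψ]
  have hlarge : 2 * (r * ‖u‖) ^ 2 ≤ a ^ 2 - 2 * r * ‖u‖ * a - (r * ‖u‖) ^ 2 := by
    nlinarith [mul_pos hr hu0]
  have hsmall : ‖u‖ * q < ‖u‖ * (r ^ 2 / 2 * ‖u‖) := by gcongr
  nlinarith [mul_pos hr hu0]

lemma exists_mem_spec2_dist_le (hP : IsStarProjection P) (hM : IsSymmetricOn D M)
    (hdom : P.range ≤ domSq D M) {l γ r : ℝ} [(domEigenspace D M (l : ℂ)).HasOrthogonalProjection]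
    (hgap : ∀ v ∈ D, v ∈ (domEigenspace D M (l : ℂ))ᗮ → γ * ‖v‖ ≤ ‖M v - (l : ℂ) • v‖)
    (hr : 0 < r) (hrγ : 8 * r ≤ γ)
    (happrox : ∀ z ∈ Metric.closedBall (l : ℂ) r, ∀ ψ ∈ domEigenspace D M (l : ℂ),
      ‖P (sqz M z (P ψ)) - ((l : ℂ) - z) ^ 2 • ψ‖ ≤ r ^ 2 / 8 * ‖ψ‖)
    {ψ : H} (hψ : ψ ∈ domEigenspace D M (l : ℂ)) (hψP : ‖ψ‖ < 4 * ‖P ψ‖) :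
    ∃ z ∈ spec2 M P, dist z l ≤ r := by
  refine exists_mem_spec2_dist_le_of_norm_apply_lt (c := r ^ 2 / 2) hP hM hdom hr (by positivity)
    (fun z hz u hu => half_sq_mul_norm_le_norm_apply_sqz hP hM hdom hgap hr hrγ happrox hz hu)
    ⟨ψ, rfl⟩ ?_
  calc ‖P (sqz M l (P ψ))‖ = ‖P (sqz M l (P ψ)) - ((l : ℂ) - l) ^ 2 • ψ‖ := by
        rw [sub_self, zero_pow two_ne_zero, zero_smul, sub_zero]
    _ ≤ r ^ 2 / 8 * ‖ψ‖ := happrox _ (Metric.mem_closedBall_self hr.le) ψ hψ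
    _ < r ^ 2 / 8 * (4 * ‖P ψ‖) := by gcongr
    _ = r ^ 2 / 2 * ‖P ψ‖ := by ring

end LowerBound

section Limit

variable {E ι : Type*} [NormedAddCommGroup E] [InnerProductSpace ℂ E] {F : Filter ι}

lemma eventually_forall_norm_sub_smul_le {K : Submodule ℂ E} [FiniteDimensional ℂ K]
    {T : ι → E →ₗ[ℂ] E} {c : ℂ} (hT : ∀ ψ ∈ K, Tendsto (fun i => ‖T i ψ - c • ψ‖) F (𝓝 0))
    {δ : ℝ} (hδ : 0 < δ) : ∀ᶠ i in F, ∀ ψ ∈ K, ‖T i ψ - c • ψ‖ ≤ δ * ‖ψ‖ := by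
  have hzero : ∀ ψ : K, Tendsto (fun i => ((T i - c • LinearMap.id) ∘ₗ K.subtype) ψ) F (𝓝 0) :=
    fun ψ => tendsto_zero_iff_norm_tendsto_zero.2 (hT ψ ψ.2)
  filter_upwards [eventually_forall_norm_map_le_of_tendsto_zero hzero hδ] with i hi ψ hψ
  exact hi ⟨ψ, hψ⟩

lemma norm_apply_sqz_sub_le {M : E →ₗ[ℂ] E} {P : E →L[ℂ] E} (hP : IsIdempotentElem P) {l : ℂ}
    {ψ : E} {δ : ℝ} (h0 : ‖P ψ - ψ‖ ≤ δ * ‖ψ‖) (h1 : ‖P (M (P ψ)) - l • ψ‖ ≤ δ * ‖ψ‖)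
    (h2 : ‖P (M (M (P ψ))) - l ^ 2 • ψ‖ ≤ δ * ‖ψ‖) (z : ℂ) :
    ‖P (sqz M z (P ψ)) - (l - z) ^ 2 • ψ‖ ≤ (1 + ‖z‖) ^ 2 * δ * ‖ψ‖ := by
  have hPP : P (P ψ) = P ψ := apply_eq_self_of_mem_range hP ⟨ψ, rfl⟩
  have hsplit : P (sqz M z (P ψ)) - (l - z) ^ 2 • ψ = (P (M (M (P ψ))) - l ^ 2 • ψ)
      - (2 * z) • (P (M (P ψ)) - l • ψ) + z ^ 2 • (P ψ - ψ) := by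
    simp only [sqz_eq_comp_sub_add, LinearMap.add_apply, LinearMap.sub_apply,
      LinearMap.smul_apply, LinearMap.comp_apply, LinearMap.id_apply, map_add, map_sub, map_smul,
      hPP]
    module
  calc ‖P (sqz M z (P ψ)) - (l - z) ^ 2 • ψ‖
      ≤ ‖P (M (M (P ψ))) - l ^ 2 • ψ‖ + ‖2 * z‖ * ‖P (M (P ψ)) - l • ψ‖
        + ‖z ^ 2‖ * ‖P ψ - ψ‖ := by
        rw [hsplit, ← norm_smul, ← norm_smul]
        exact (norm_add_le _ _).trans (add_le_add_left (norm_sub_le _ _) _)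
    _ ≤ δ * ‖ψ‖ + ‖2 * z‖ * (δ * ‖ψ‖) + ‖z ^ 2‖ * (δ * ‖ψ‖) := by gcongr
    _ = (1 + ‖z‖) ^ 2 * δ * ‖ψ‖ := by
        rw [norm_mul, norm_pow, Complex.norm_two]
        ring

lemma eventually_forall_norm_apply_sqz_sub_le {M : E →ₗ[ℂ] E} {P : ι → E →L[ℂ] E}
    (hP : ∀ i, IsIdempotentElem (P i)) {K : Submodule ℂ E} [FiniteDimensional ℂ K] {l : ℂ}
    (h0 : ∀ ψ ∈ K, Tendsto (fun i => P i ψ) F (𝓝 ψ))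
    (h1 : ∀ ψ ∈ K, Tendsto (fun i => ‖P i (M (P i ψ)) - l • ψ‖) F (𝓝 0))
    (h2 : ∀ ψ ∈ K, Tendsto (fun i => ‖P i (M (M (P i ψ))) - l ^ 2 • ψ‖) F (𝓝 0))
    (z₀ : ℂ) (r : ℝ) {η : ℝ} (hη : 0 < η) :
    ∀ᶠ i in F, ∀ z ∈ Metric.closedBall z₀ r, ∀ ψ ∈ K,
      ‖P i (sqz M z (P i ψ)) - (l - z) ^ 2 • ψ‖ ≤ η * ‖ψ‖ := by
  obtain ⟨δ, hδ, hδη⟩ : ∃ δ > 0, (1 + (‖z₀‖ + r)) ^ 2 * δ ≤ η := by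
    obtain ⟨δ, hδ, hlt⟩ := exists_pos_mul_lt hη ((1 + (‖z₀‖ + r)) ^ 2)
    exact ⟨δ, hδ, hlt.le⟩
  have h0' : ∀ ψ ∈ K, Tendsto (fun i => ‖(P i : E →ₗ[ℂ] E) ψ - (1 : ℂ) • ψ‖) F (𝓝 0) :=
    fun ψ hψ => by
      simpa only [ContinuousLinearMap.coe_coe, one_smul] using
        tendsto_iff_norm_sub_tendsto_zero.1 (h0 ψ hψ)
  filter_upwards [eventually_forall_norm_sub_smul_le h0' hδ,
    eventually_forall_norm_sub_smul_le
      (T := fun i => (P i : E →ₗ[ℂ] E) ∘ₗ M ∘ₗ (P i : E →ₗ[ℂ] E)) h1 hδ,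
    eventually_forall_norm_sub_smul_le
      (T := fun i => (P i : E →ₗ[ℂ] E) ∘ₗ M ∘ₗ M ∘ₗ (P i : E →ₗ[ℂ] E)) h2 hδ]
    with i hi0 hi1 hi2 z hz ψ hψ
  have hzr : ‖z‖ ≤ ‖z₀‖ + r := norm_le_of_mem_closedBall hz
  calc ‖P i (sqz M z (P i ψ)) - (l - z) ^ 2 • ψ‖ ≤ (1 + ‖z‖) ^ 2 * δ * ‖ψ‖ :=
        norm_apply_sqz_sub_le (hP i)
          (by simpa only [ContinuousLinearMap.coe_coe, one_smul] using hi0 ψ hψ)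
          (hi1 ψ hψ) (hi2 ψ hψ) z
    _ ≤ (1 + (‖z₀‖ + r)) ^ 2 * δ * ‖ψ‖ := by gcongr
    _ ≤ η * ‖ψ‖ := by gcongr

end Limit

theorem isolated_eigenvalue_mem_limit_of_secondOrderSpectra_general {ι : Type*} {F : Filter ι}
    {D : Submodule ℂ H} {M : H →ₗ[ℂ] H} (hsym : IsSymmetricOn D M) {P : ι → H →L[ℂ] H}
    (hP : ∀ i, IsStarProjection (P i)) (hdom : ∀ i, (P i).range ≤ domSq D M) {l : ℝ}
    (heig : domEigenspace D M (l : ℂ) ≠ ⊥)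
    (hfinmult : FiniteDimensional ℂ (domEigenspace D M (l : ℂ)))
    (hiso : ∃ ε > 0, ∀ z ∈ pspec D M, z ≠ (l : ℂ) → ε ≤ ‖z - (l : ℂ)‖)
    (h0 : ∀ ψ ∈ domEigenspace D M (l : ℂ), Tendsto (fun i => P i ψ) F (𝓝 ψ))
    (h1 : ∀ ψ ∈ domEigenspace D M (l : ℂ),
      Tendsto (fun i => ‖P i (M (P i ψ)) - (l : ℂ) • ψ‖) F (𝓝 0))
    (h2 : ∀ ψ ∈ domEigenspace D M (l : ℂ),
      Tendsto (fun i => ‖P i (M (M (P i ψ))) - (l : ℂ) ^ 2 • ψ‖) F (𝓝 0)) :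
    ∃ zs : ι → ℂ, (∀ i, P i ≠ 0 → zs i ∈ spec2 M (P i)) ∧ Tendsto zs F (𝓝 (l : ℂ)) := by
  obtain ⟨ε, hε, hgap⟩ := hiso
  obtain ⟨ψ, hψ, hψ0⟩ := Submodule.exists_mem_ne_zero_of_ne_bot heig
  have hdist : ∀ r > 0, ∀ᶠ i in F, ∃ z ∈ spec2 M (P i), dist z l ≤ r := by
    intro r hr
    have hψP : ∀ᶠ i in F, ‖ψ‖ < 4 * ‖P i ψ‖ :=
      ((h0 ψ hψ).norm.const_mul 4).eventually_const_lt (by linarith [norm_pos_iff.2 hψ0])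
    have happrox := eventually_forall_norm_apply_sqz_sub_le (fun i => (hP i).isIdempotentElem)
      h0 h1 h2 l (min r (ε / 8)) (η := min r (ε / 8) ^ 2 / 8) (by positivity)
    filter_upwards [hψP, happrox] with i hψPi hi
    obtain ⟨z, hz, hzl⟩ := exists_mem_spec2_dist_le (hP i) hsym (hdom i)
      (fun v => mul_norm_le_norm_apply_sub_smul_of_mem_orthogonal hsym hε hgap)
      (by positivity) (by linarith [min_le_right r (ε / 8)]) hi hψ hψPi
    exact ⟨z, hz, hzl.trans (min_le_left _ _)⟩
  obtain ⟨zs, hzs, hlim⟩ :=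
    exists_tendsto_forall_mem (fun i => isClosed_spec2 (hP i) hsym (hdom i)) hdist
  exact ⟨zs, fun i hi => hzs i (spec2_nonempty (hP i) hsym (hdom i) hi), hlim⟩

/-- **Theorem 1**:  if `λ` is an isolated eigenvalue of finite multiplicity of the self-adjoint
operator `M` (with domain `D`) and condition (H) holds, then `λ` belongs to the uniform
limiting set `Λ` of the second order spectra `Spec₂(M|L_n)`, where `L_n = ran P_n` is an
`n`-dimensional subspace of `Dom M²` and `P_n x → x` for every `x`. -/
theorem isolated_eigenvalue_mem_limit_of_secondOrderSpectra
    (D : Submodule ℂ H) (M : H →ₗ[ℂ] H)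
    -- `M` restricted to `D` is a (densely defined) self-adjoint operator:
    (hdense : Dense (D : Set H))
    (hsym : ∀ u ∈ D, ∀ v ∈ D, (inner ℂ (M u) v : ℂ) = inner ℂ u (M v))
    (hsa : ∀ x y : H, (∀ u ∈ D, (inner ℂ (M u) x : ℂ) = inner ℂ u y) → x ∈ D ∧ M x = y)
    -- `P n` is an orthogonal projection with `n`-dimensional range contained in `Dom M²`:
    (P : ℕ → H →L[ℂ] H)
    (hPsa : ∀ n, IsSelfAdjoint (P n))
    (hPidem : ∀ n, IsIdempotentElem (P n))
    (hPfin : ∀ n, FiniteDimensional ℂ (LinearMap.range (P n : H →ₗ[ℂ] H)))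
    (hPdim : ∀ n, Module.finrank ℂ (LinearMap.range (P n : H →ₗ[ℂ] H)) = n)
    (hPdom : ∀ n, ∀ v ∈ LinearMap.range (P n : H →ₗ[ℂ] H), v ∈ D ∧ M v ∈ D)
    (hPlim : ∀ x : H, Tendsto (fun n => P n x) atTop (𝓝 x))
    -- `λ` is an isolated eigenvalue of `M` of finite multiplicity:
    (l : ℝ)
    (heig : ∃ ψ, ψ ≠ 0 ∧ ψ ∈ D ∧ M ψ = (l : ℂ) • ψ)
    (hfinmult : FiniteDimensional ℂ
      ↥(D ⊓ LinearMap.ker (M - (l : ℂ) • LinearMap.id)))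
    (hiso : ∃ ε > 0, ∀ z ∈ pspec D M, z ≠ (l : ℂ) → ε ≤ ‖z - (l : ℂ)‖)
    -- condition (H):
    (hH : ∀ ψ, ψ ∈ D → M ψ = (l : ℂ) • ψ →
      Tendsto (fun n => ‖P n (M (P n ψ)) - (l : ℂ) • ψ‖) atTop (𝓝 0) ∧
      Tendsto (fun n => ‖P n (M (M (P n ψ))) - ((l : ℂ) ^ 2) • ψ‖) atTop (𝓝 0)) :
    -- conclusion: `λ ∈ Λ`
    ∃ zs : ℕ → ℂ, (∀ n, 1 ≤ n → zs n ∈ spec2 M (P n)) ∧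
      Tendsto zs atTop (𝓝 (l : ℂ)) := by
  have hmem : ∀ ψ ∈ domEigenspace D M (l : ℂ), ψ ∈ D ∧ M ψ = (l : ℂ) • ψ :=
    fun _ => mem_domEigenspace.1
  have hne : ∀ n, 1 ≤ n → P n ≠ 0 := by
    intro n hn hPn
    have h := hPdim n
    rw [hPn, ContinuousLinearMap.toLinearMap_zero, LinearMap.range_zero, finrank_bot] at h
    lia
  obtain ⟨ψ, hψ0, hψ⟩ := heig
  obtain ⟨zs, hzs, hlim⟩ := isolated_eigenvalue_mem_limit_of_secondOrderSpectra_general hsym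
    (fun n => ⟨hPidem n, hPsa n⟩) hPdom
    (Submodule.ne_bot_iff _ |>.2 ⟨ψ, mem_domEigenspace.2 hψ, hψ0⟩) hfinmult hiso
    (fun ψ _ => hPlim ψ) (fun ψ hψ => (hH ψ (hmem ψ hψ).1 (hmem ψ hψ).2).1)
    (fun ψ hψ => (hH ψ (hmem ψ hψ).1 (hmem ψ hψ).2).2)
  exact ⟨zs, fun n hn => hzs n (hne n hn), hlim⟩

end
end

section
/- Let M be a self-adjoint operator, L_n ⊆ Dom(M²) an n-dimensional subspace with orthogonal projection P_n, and σ_n(z) := inf{‖P_n(M−z)² v‖/‖v‖ : 0 ≠ v ∈ L_n}. Then the only local minima of σ_n are the points where it vanishes: if z₀ ∈ ℂ satisfies σ_n(z₀) > 0, then every neighbourhood of z₀ contains a point z with σ_n(z) < σ_n(z₀). -/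
open Filter Topology

noncomputable section

variable {H : Type*} [NormedAddCommGroup H] [InnerProductSpace ℂ H] [CompleteSpace H]

/-- `σ_n(z) = inf {‖P (M - z)² v‖ / ‖v‖ : 0 ≠ v ∈ ran P}`. -/
def sigma2 (M : H →ₗ[ℂ] H) (P : H →L[ℂ] H) (z : ℂ) : ℝ :=
  sInf {r : ℝ | ∃ v, v ∈ LinearMap.range (P : H →ₗ[ℂ] H) ∧ v ≠ 0 ∧ r = ‖P (sqz M z v)‖ / ‖v‖}

/-!
Let `A z = P (M - z)² |_L` on `L = ran P`. Since `σ_n(z)` is the minimum modulus of `A z`, a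
positive local minimum at `z₀` makes `A z` invertible near `z₀`. If `v` is a unit vector realising
`σ_n(z₀)`, the holomorphic function `z ↦ (A z)⁻¹ (A z₀ v)` then has norm at most `1` near `z₀`, and
norm `1` at `z₀`. By the maximum modulus principle in a strictly convex space it is locally equal
to `v`, so `A z v` does not depend on `z` near `z₀`. This contradicts the leading term `z² v` of
the quadratic polynomial `A z v`.
-/

section MinModulus

variable {𝕜 E F : Type*} [NontriviallyNormedField 𝕜] [NormedAddCommGroup E] [NormedSpace 𝕜 E]
  [NormedAddCommGroup F] [NormedSpace 𝕜 F]

/-- The minimum modulus `inf {‖T v‖ / ‖v‖ : v ≠ 0}` of a bounded operator, with value `0` on the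
zero space. -/
def minModulus (T : E →L[𝕜] F) : ℝ :=
  ⨅ v : {v : E // v ≠ 0}, ‖T v‖ / ‖(v : E)‖

theorem minModulus_mul_norm_le (T : E →L[𝕜] F) (v : E) : minModulus T * ‖v‖ ≤ ‖T v‖ := by
  rcases eq_or_ne v 0 with rfl | hv
  · simp
  · rw [← le_div_iff₀ (norm_pos_iff.mpr hv)]
    exact ciInf_le (f := fun v : {v : E // v ≠ 0} => ‖T v‖ / ‖(v : E)‖)
      ⟨0, Set.forall_mem_range.mpr fun _ => by positivity⟩ ⟨v, hv⟩

theorem nontrivial_of_minModulus_pos {T : E →L[𝕜] F} (hT : 0 < minModulus T) : Nontrivial E := by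
  by_contra hE
  rw [not_nontrivial_iff_subsingleton] at hE
  have : IsEmpty {v : E // v ≠ 0} := ⟨fun v => v.2 (Subsingleton.elim _ _)⟩
  exact hT.ne' (Real.iInf_of_isEmpty _)

theorem injective_of_minModulus_pos {T : E →L[𝕜] F} (hT : 0 < minModulus T) :
    Function.Injective T := by
  refine (injective_iff_map_eq_zero T).mpr fun v hv => norm_le_zero_iff.mp ?_
  refine nonpos_of_mul_nonpos_right ?_ hT
  simpa only [hv, norm_zero] using minModulus_mul_norm_le T v

theorem isUnit_of_minModulus_pos [CompleteSpace 𝕜] [FiniteDimensional 𝕜 E]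
    {T : E →L[𝕜] E} (hT : 0 < minModulus T) : IsUnit T := by
  have : CompleteSpace E := FiniteDimensional.complete 𝕜 E
  rw [ContinuousLinearMap.isUnit_iff_isUnit_toLinearMap, LinearMap.isUnit_iff_ker_eq_bot]
  exact LinearMap.ker_eq_bot.mpr (injective_of_minModulus_pos hT)

end MinModulus

theorem exists_norm_apply_eq_minModulus {𝕜 E F : Type*} [RCLike 𝕜] [NormedAddCommGroup E]
    [NormedSpace 𝕜 E] [FiniteDimensional 𝕜 E] [Nontrivial E] [NormedAddCommGroup F]
    [NormedSpace 𝕜 F] (T : E →L[𝕜] F) :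
    ∃ v, ‖v‖ = 1 ∧ ‖T v‖ = minModulus T := by
  have : ProperSpace E := FiniteDimensional.proper_rclike 𝕜 E
  have normalize_mem (u : E) (hu : u ≠ 0) : (‖u‖ : 𝕜)⁻¹ • u ∈ Metric.sphere (0 : E) 1 :=
    mem_sphere_zero_iff_norm.mpr (norm_smul_inv_norm hu)
  obtain ⟨u, hu⟩ := exists_ne (0 : E)
  obtain ⟨v, hv, hmin⟩ := (isCompact_sphere (0 : E) 1).exists_isMinOn
    ⟨_, normalize_mem u hu⟩ T.continuous.norm.continuousOn
  have hv : ‖v‖ = 1 := mem_sphere_zero_iff_norm.mp hv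
  have : Nonempty {v : E // v ≠ 0} := ⟨u, hu⟩
  refine ⟨v, hv, le_antisymm (le_ciInf fun w => ?_) ?_⟩
  · have := isMinOn_iff.mp hmin _ (normalize_mem w w.2)
    rwa [map_smul, norm_smul, norm_inv, RCLike.norm_ofReal, abs_norm, inv_mul_eq_div] at this
  · simpa only [hv, mul_one] using minModulus_mul_norm_le T v

theorem exists_eventually_apply_eq_of_isLocalMin_minModulus {E : Type*} [NormedAddCommGroup E]
    [NormedSpace ℂ E] [FiniteDimensional ℂ E] [StrictConvexSpace ℝ E] {T : ℂ → E →L[ℂ] E} {z₀ : ℂ}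
    (hT : ∀ᶠ z in 𝓝 z₀, DifferentiableAt ℂ T z) (hpos : 0 < minModulus (T z₀))
    (hmin : IsLocalMin (fun z => minModulus (T z)) z₀) :
    ∃ v ≠ 0, ∀ᶠ z in 𝓝 z₀, T z v = T z₀ v := by
  have : CompleteSpace E := FiniteDimensional.complete ℂ E
  have : Nontrivial E := nontrivial_of_minModulus_pos hpos
  obtain ⟨v, hv, hTv⟩ := exists_norm_apply_eq_minModulus (T z₀)
  have hunit : ∀ᶠ z in 𝓝 z₀, IsUnit (T z) :=
    hmin.mono fun z hz => isUnit_of_minModulus_pos (hpos.trans_le hz)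
  let f : ℂ → E := fun z => Ring.inverse (T z) (T z₀ v)
  have hTf (z : ℂ) (hz : IsUnit (T z)) : T z (f z) = T z₀ v :=
    DFunLike.congr_fun (Ring.mul_inverse_cancel _ hz) (T z₀ v)
  have hf₀ : f z₀ = v :=
    DFunLike.congr_fun (Ring.inverse_mul_cancel _ hunit.self_of_nhds) v
  have hf : ∀ᶠ z in 𝓝 z₀, DifferentiableAt ℂ f z := by
    filter_upwards [hT, hunit] with z hTz hz
    exact (hTz.inverse hz).clm_apply (differentiableAt_const _)
  have hmax : IsLocalMax (norm ∘ f) z₀ := by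
    filter_upwards [hmin, hunit] with z hz hu
    rw [Function.comp_apply, Function.comp_apply, hf₀, hv]
    refine le_of_mul_le_mul_left ?_ hpos
    calc minModulus (T z₀) * ‖f z‖ ≤ minModulus (T z) * ‖f z‖ := by gcongr
      _ ≤ ‖T z (f z)‖ := minModulus_mul_norm_le _ _
      _ = minModulus (T z₀) * 1 := by rw [hTf z hu, hTv, mul_one]
  refine ⟨v, norm_ne_zero_iff.mp (hv ▸ one_ne_zero), ?_⟩
  filter_upwards [Complex.eventually_eq_of_isLocalMax_norm hf hmax, hunit] with z hz hu
  rw [← hTf z hu, hz, hf₀]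

theorem eq_zero_of_eventually_quadratic_eq {𝕜 E : Type*} [NontriviallyNormedField 𝕜]
    [NeZero (2 : 𝕜)] [AddCommGroup E] [Module 𝕜 E] {a b c d : E} {z₀ : 𝕜}
    (h : ∀ᶠ z in 𝓝 z₀, a + z • b + z ^ 2 • c = d) : c = 0 := by
  have hplus : Tendsto (fun t => z₀ + t) (𝓝 0) (𝓝 z₀) :=
    (continuous_const_add z₀).tendsto' _ _ (add_zero z₀)
  have hminus : Tendsto (fun t => z₀ - t) (𝓝 0) (𝓝 z₀) :=
    (continuous_sub_left z₀).tendsto' _ _ (sub_zero z₀)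
  obtain ⟨t, ⟨hp, hm⟩, ht⟩ : ∃ t : 𝕜, (_ ∧ _) ∧ t ≠ 0 :=
    ((((hplus.eventually h).and (hminus.eventually h)).filter_mono nhdsWithin_le_nhds).and
      (self_mem_nhdsWithin (s := {0}ᶜ))).exists
  have second_difference : (2 * t ^ 2) • c = 0 :=
    calc (2 * t ^ 2) • c
        = (a + (z₀ + t) • b + (z₀ + t) ^ 2 • c) + (a + (z₀ - t) • b + (z₀ - t) ^ 2 • c)
          - (2 : 𝕜) • (a + z₀ • b + z₀ ^ 2 • c) := by module
      _ = 0 := by rw [hp, hm, h.self_of_nhds]; module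
  exact (smul_eq_zero.mp second_difference).resolve_left
    (mul_ne_zero two_ne_zero (pow_ne_zero 2 ht))

theorem not_isLocalMin_minModulus_quadratic {E : Type*} [NormedAddCommGroup E] [NormedSpace ℂ E]
    [FiniteDimensional ℂ E] [StrictConvexSpace ℝ E] {A B C : E →L[ℂ] E} (hC : Function.Injective C)
    {z₀ : ℂ} (hpos : 0 < minModulus (A + z₀ • B + z₀ ^ 2 • C)) :
    ¬ IsLocalMin (fun z : ℂ => minModulus (A + z • B + z ^ 2 • C)) z₀ := by
  intro hmin
  have hdiff : Differentiable ℂ fun z : ℂ => A + z • B + z ^ 2 • C := by fun_prop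
  obtain ⟨v, hv, hconst⟩ :=
    exists_eventually_apply_eq_of_isLocalMin_minModulus (.of_forall hdiff) hpos hmin
  simp only [add_apply, smul_apply] at hconst
  exact hv ((map_eq_zero_iff C hC).mp (eq_zero_of_eventually_quadratic_eq hconst))

section Compression

variable {𝕜 E : Type*} [NontriviallyNormedField 𝕜] [CompleteSpace 𝕜] [NormedAddCommGroup E]
  [NormedSpace 𝕜 E] (P : E →L[𝕜] E) [FiniteDimensional 𝕜 (LinearMap.range (P : E →ₗ[𝕜] E))]

/-- The compression `P A |_{ran P}` of a linear map `A` to the finite-dimensional range of `P`. -/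
def compression (A : E →ₗ[𝕜] E) :
    LinearMap.range (P : E →ₗ[𝕜] E) →L[𝕜] LinearMap.range (P : E →ₗ[𝕜] E) :=
  LinearMap.toContinuousLinearMap
    ((P : E →ₗ[𝕜] E).rangeRestrict ∘ₗ A ∘ₗ (LinearMap.range (P : E →ₗ[𝕜] E)).subtype)

theorem coe_compression_apply (A : E →ₗ[𝕜] E) (v : LinearMap.range (P : E →ₗ[𝕜] E)) :
    (compression P A v : E) = P (A v) :=
  rfl

end Compression

section CompressedSquare

variable {E : Type*} [NormedAddCommGroup E] [InnerProductSpace ℂ E] (P : E →L[ℂ] E)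
  [FiniteDimensional ℂ (LinearMap.range (P : E →ₗ[ℂ] E))]

theorem sigma2_eq_minModulus_compression (M : E →ₗ[ℂ] E) (z : ℂ) :
    sigma2 M P z = minModulus (compression P (sqz M z)) := by
  refine congrArg sInf (Set.ext fun r => ⟨?_, ?_⟩)
  · rintro ⟨v, hvP, hv, rfl⟩
    exact ⟨⟨⟨v, hvP⟩, Subtype.coe_ne_coe.mp hv⟩, rfl⟩
  · rintro ⟨⟨v, hv⟩, rfl⟩
    exact ⟨v, v.2, Subtype.coe_ne_coe.mpr hv, rfl⟩

variable {P}

theorem compression_sqz (hP : IsIdempotentElem P) (M : E →ₗ[ℂ] E) (z : ℂ) :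
    compression P (sqz M z) =
      compression P (M ∘ₗ M) + z • (-2 : ℂ) • compression P M + z ^ 2 • 1 := by
  ext v
  have hPv : P v = v :=
    (LinearMap.IsIdempotentElem.mem_range_iff
      (ContinuousLinearMap.IsIdempotentElem.toLinearMap hP)).mp v.2
  simp only [add_apply, smul_apply, one_apply_eq_self, Submodule.coe_add, Submodule.coe_smul,
    coe_compression_apply, sqz, LinearMap.comp_apply, LinearMap.sub_apply, LinearMap.smul_apply,
    LinearMap.id_apply, map_sub, map_smul, hPv]
  module

end CompressedSquare

theorem sigma_no_positive_local_minimum_general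
    {E : Type*} [NormedAddCommGroup E] [InnerProductSpace ℂ E]
    (M : E →ₗ[ℂ] E) (P : E →L[ℂ] E) (hPidem : IsIdempotentElem P)
    [FiniteDimensional ℂ (LinearMap.range (P : E →ₗ[ℂ] E))]
    (z₀ : ℂ) (hz₀ : 0 < sigma2 M P z₀) :
    ∀ ε > 0, ∃ z : ℂ, ‖z - z₀‖ < ε ∧ sigma2 M P z < sigma2 M P z₀ := by
  intro ε hε
  by_contra! hle
  have hmin : IsLocalMin (sigma2 M P) z₀ := by
    filter_upwards [Metric.ball_mem_nhds z₀ hε] with z hz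
    exact hle z (mem_ball_iff_norm.mp hz)
  simp only [funext (sigma2_eq_minModulus_compression P M), compression_sqz hPidem] at hz₀ hmin
  -- Makes strict convexity over `ℝ` available to instance search.
  let : InnerProductSpace ℝ (LinearMap.range (P : E →ₗ[ℂ] E)) :=
    InnerProductSpace.rclikeToReal ℂ _
  exact not_isLocalMin_minModulus_quadratic Function.injective_id hz₀ hmin

/-- The only local minima of `σ_n` are the points where it vanishes:  if `σ_n(z₀) > 0` then
every neighbourhood of `z₀` contains a point `z` with `σ_n(z) < σ_n(z₀)`. -/
theorem sigma_no_positive_local_minimum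
    (D : Submodule ℂ H) (M : H →ₗ[ℂ] H)
    -- `M` restricted to `D` is a (densely defined) self-adjoint operator:
    (hdense : Dense (D : Set H))
    (hsym : ∀ u ∈ D, ∀ v ∈ D, (inner ℂ (M u) v : ℂ) = inner ℂ u (M v))
    (hsa : ∀ x y : H, (∀ u ∈ D, (inner ℂ (M u) x : ℂ) = inner ℂ u y) → x ∈ D ∧ M x = y)
    -- `P` is an orthogonal projection with finite-dimensional range contained in `Dom M²`:
    (P : H →L[ℂ] H)
    (hPsa : IsSelfAdjoint P)
    (hPidem : IsIdempotentElem P)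
    (hPfin : FiniteDimensional ℂ (LinearMap.range (P : H →ₗ[ℂ] H)))
    (hPdom : ∀ v ∈ LinearMap.range (P : H →ₗ[ℂ] H), v ∈ D ∧ M v ∈ D)
    (z₀ : ℂ) (hz₀ : 0 < sigma2 M P z₀) :
    ∀ ε > 0, ∃ z : ℂ, ‖z - z₀‖ < ε ∧ sigma2 M P z < sigma2 M P z₀ :=
  sigma_no_positive_local_minimum_general M P hPidem z₀ hz₀

end
end

section
/- Let M be a self-adjoint operator, L_n ⊆ Dom(M²) a finite-dimensional subspace with orthogonal projection P_n. If |z| > 3·max{‖P_n M² |L_n‖, ‖P_n M |L_n‖, 1}, then the operator P_n(M−z)²|L_n : L_n → L_n is invertible and ‖[P_n(M−z)²|L_n]^{-1}‖ ≤ (9/2)|z|^{-2}. -/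
open Filter Topology

noncomputable section

variable {H : Type*} [NormedAddCommGroup H] [InnerProductSpace ℂ H] [CompleteSpace H]

/-!
Compressing `M² - 2zM + z²` to `L = ran P` gives `P (M - z)² |_L = z² - T` with
`T = 2z (P M |_L) - P M² |_L`. The assumptions on `z` give `‖T‖ ≤ (2/3 + 1/9) |z|² = (7/9) |z|²`, so
`z²` lies outside the closed disc of radius `‖T‖` that contains the spectrum of `T`, and the inverse
is the resolvent of `T` at `z²`, of norm at most `1 / (|z|² - ‖T‖) ≤ (9/2) |z|⁻²`.
-/

section NormedAlgebra

theorem norm_resolvent_le {𝕜 R : Type*} [NormedField 𝕜] [NormedRing R] [NormedAlgebra 𝕜 R]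
    {a : R} {k : 𝕜} (hk : k ∈ resolventSet 𝕜 a) (hak : ‖a‖ < ‖k‖) :
    ‖resolvent a k‖ ≤ ‖(1 : R)‖ / (‖k‖ - ‖a‖) := by
  have resolvent_eq : k • resolvent a k = 1 + a * resolvent a k := by
    rw [← sub_eq_iff_eq_add, Algebra.smul_def, ← sub_mul]
    exact Ring.mul_inverse_cancel _ hk
  have norm_le : ‖k‖ * ‖resolvent a k‖ ≤ ‖(1 : R)‖ + ‖a‖ * ‖resolvent a k‖ :=
    calc ‖k‖ * ‖resolvent a k‖ = ‖1 + a * resolvent a k‖ := by rw [← norm_smul, resolvent_eq]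
      _ ≤ ‖(1 : R)‖ + ‖a‖ * ‖resolvent a k‖ := norm_add_le_of_le le_rfl (norm_mul_le _ _)
  rw [le_div_iff₀ (sub_pos.mpr hak)]
  linarith

theorem norm_two_mul_smul_sub_le {𝕜 V : Type*} [NormedField 𝕜] [SeminormedAddCommGroup V]
    [NormedSpace 𝕜 V] {z : 𝕜} {a b : V} (ha : ‖a‖ ≤ ‖z‖ ^ 2 / 9) (hb : ‖b‖ ≤ ‖z‖ / 3) :
    ‖(2 * z) • b - a‖ ≤ 7 / 9 * ‖z‖ ^ 2 := by
  have norm_two_mul_le : ‖2 * z‖ ≤ 2 * ‖z‖ := by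
    simpa only [two_mul] using norm_add_le z z
  calc ‖(2 * z) • b - a‖ ≤ ‖2 * z‖ * ‖b‖ + ‖a‖ := by
        simpa only [norm_smul] using norm_sub_le ((2 * z) • b) a
    _ ≤ 2 * ‖z‖ * (‖z‖ / 3) + ‖z‖ ^ 2 / 9 := by gcongr
    _ = 7 / 9 * ‖z‖ ^ 2 := by ring

variable {𝕜 R : Type*} [NormedField 𝕜] [NormedRing R] [NormedAlgebra 𝕜 R] [CompleteSpace R]
  {a b : R} {z : 𝕜}

theorem sq_mem_resolventSet_two_mul_smul_sub (h_one : ‖(1 : R)‖ ≤ 1) (hz : z ≠ 0)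
    (ha : ‖a‖ ≤ ‖z‖ ^ 2 / 9) (hb : ‖b‖ ≤ ‖z‖ / 3) :
    z ^ 2 ∈ resolventSet 𝕜 ((2 * z) • b - a) := by
  apply spectrum.mem_resolventSet_of_norm_lt_mul
  calc ‖(2 * z) • b - a‖ * ‖(1 : R)‖ ≤ ‖(2 * z) • b - a‖ :=
        mul_le_of_le_one_right (norm_nonneg _) h_one
    _ ≤ 7 / 9 * ‖z‖ ^ 2 := norm_two_mul_smul_sub_le ha hb
    _ < ‖z‖ ^ 2 := mul_lt_of_lt_one_left (pow_pos (norm_pos_iff.mpr hz) 2) (by norm_num)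
    _ = ‖z ^ 2‖ := (norm_pow z 2).symm

theorem norm_resolvent_two_mul_smul_sub_le (h_one : ‖(1 : R)‖ ≤ 1) (hz : z ≠ 0)
    (ha : ‖a‖ ≤ ‖z‖ ^ 2 / 9) (hb : ‖b‖ ≤ ‖z‖ / 3) :
    ‖resolvent ((2 * z) • b - a) (z ^ 2)‖ ≤ (9 / 2) / ‖z‖ ^ 2 := by
  have gap_le : 2 / 9 * ‖z‖ ^ 2 ≤ ‖z ^ 2‖ - ‖(2 * z) • b - a‖ := by
    linarith only [norm_pow z 2, norm_two_mul_smul_sub_le ha hb]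
  calc ‖resolvent ((2 * z) • b - a) (z ^ 2)‖ ≤ ‖(1 : R)‖ / (‖z ^ 2‖ - ‖(2 * z) • b - a‖) :=
        norm_resolvent_le (sq_mem_resolventSet_two_mul_smul_sub h_one hz ha hb)
          (sub_pos.mp (gap_le.trans_lt' (by positivity)))
    _ ≤ 1 / (2 / 9 * ‖z‖ ^ 2) := by gcongr
    _ = (9 / 2) / ‖z‖ ^ 2 := by field_simp

end NormedAlgebra

theorem le_of_three_mul_max_lt {a b r : ℝ} (h : 3 * max (max a b) 1 < r) :
    0 < r ∧ a ≤ r ^ 2 / 9 ∧ b ≤ r / 3 := by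
  have h_max : max (max a b) 1 < r / 3 := by linarith
  obtain ⟨⟨ha, hb⟩, h_one⟩ : (a < r / 3 ∧ b < r / 3) ∧ 1 < r / 3 := by
    simpa only [max_lt_iff] using h_max
  refine ⟨by linarith, ?_, hb.le⟩
  calc a ≤ r / 3 := ha.le
    _ ≤ (r / 3) ^ 2 := le_self_pow₀ h_one.le two_ne_zero
    _ = r ^ 2 / 9 := by ring

section Compression

variable {E : Type*} [NormedAddCommGroup E] [InnerProductSpace ℂ E]

theorem compress_sub (P : E →L[ℂ] E) (S T : E →ₗ[ℂ] E) :
    compress P (S - T) = compress P S - compress P T :=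
  LinearMap.ext fun v => Subtype.ext (map_sub P (S v) (T v))

theorem compress_smul (P : E →L[ℂ] E) (c : ℂ) (T : E →ₗ[ℂ] E) :
    compress P (c • T) = c • compress P T :=
  LinearMap.ext fun v => Subtype.ext (map_smul P c (T v))

theorem compress_id {P : E →L[ℂ] E} (hP : IsIdempotentElem P) :
    compress P LinearMap.id = LinearMap.id :=
  LinearMap.ext fun v => Subtype.ext <| (LinearMap.IsIdempotentElem.mem_range_iff
    (ContinuousLinearMap.IsIdempotentElem.toLinearMap hP)).mp v.2

theorem sqz_eq (M : E →ₗ[ℂ] E) (z : ℂ) :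
    sqz M z = z ^ 2 • LinearMap.id - ((2 * z) • M - M ∘ₗ M) := by
  ext v
  simp only [sqz, LinearMap.comp_apply, LinearMap.sub_apply, LinearMap.smul_apply,
    LinearMap.id_apply, map_sub, map_smul]
  module

theorem compress_sqz {P : E →L[ℂ] E} (hP : IsIdempotentElem P) (M : E →ₗ[ℂ] E) (z : ℂ) :
    compress P (sqz M z) =
      z ^ 2 • LinearMap.id - ((2 * z) • compress P M - compress P (M ∘ₗ M)) := by
  simp only [sqz_eq, compress_sub, compress_smul, compress_id hP]

theorem norm_inv_compression_le_general {P : E →L[ℂ] E} (hP : IsIdempotentElem P)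
    [CompleteSpace (LinearMap.range (P : E →ₗ[ℂ] E))] {M : E →ₗ[ℂ] E}
    {A B : LinearMap.range (P : E →ₗ[ℂ] E) →L[ℂ] LinearMap.range (P : E →ₗ[ℂ] E)}
    (hA : A = compress P (M ∘ₗ M)) (hB : B = compress P M) {z : ℂ} (hz : z ≠ 0)
    (hAz : ‖A‖ ≤ ‖z‖ ^ 2 / 9) (hBz : ‖B‖ ≤ ‖z‖ / 3) :
    ∃ S : LinearMap.range (P : E →ₗ[ℂ] E) →L[ℂ] LinearMap.range (P : E →ₗ[ℂ] E),
      (∀ v, S (compress P (sqz M z) v) = v) ∧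
      (∀ v, compress P (sqz M z) (S v) = v) ∧
      ‖S‖ ≤ (9 / 2) / ‖z‖ ^ 2 := by
  have compress_eq (v) :
      compress P (sqz M z) v = (algebraMap ℂ _ (z ^ 2) - ((2 * z) • B - A)) v := by
    rw [compress_sqz hP, ← hA, ← hB]
    rfl
  have norm_one_le := ContinuousLinearMap.norm_id_le (𝕜 := ℂ)
    (E := LinearMap.range (P : E →ₗ[ℂ] E))
  have sq_mem := sq_mem_resolventSet_two_mul_smul_sub norm_one_le hz hAz hBz
  refine ⟨resolvent ((2 * z) • B - A) (z ^ 2), fun v => ?_, fun v => ?_,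
    norm_resolvent_two_mul_smul_sub_le norm_one_le hz hAz hBz⟩
  · rw [compress_eq]
    exact DFunLike.congr_fun (Ring.inverse_mul_cancel _ sq_mem) v
  · rw [compress_eq]
    exact DFunLike.congr_fun (Ring.mul_inverse_cancel _ sq_mem) v

end Compression

/-- If `|z| > 3 max{‖P M²|L‖, ‖P M|L‖, 1}` then the compression of `(M-z)²` to `L = ran P` is
invertible, with inverse of norm at most `(9/2)|z|⁻²`. -/
theorem norm_inv_compression_le
    (D : Submodule ℂ H) (M : H →ₗ[ℂ] H)
    -- `M` restricted to `D` is a (densely defined) self-adjoint operator: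
    (hdense : Dense (D : Set H))
    (hsym : ∀ u ∈ D, ∀ v ∈ D, (inner ℂ (M u) v : ℂ) = inner ℂ u (M v))
    (hsa : ∀ x y : H, (∀ u ∈ D, (inner ℂ (M u) x : ℂ) = inner ℂ u y) → x ∈ D ∧ M x = y)
    -- `P` is an orthogonal projection with finite-dimensional range contained in `Dom M²`:
    (P : H →L[ℂ] H)
    (hPsa : IsSelfAdjoint P)
    (hPidem : IsIdempotentElem P)
    [FiniteDimensional ℂ ↥(LinearMap.range (P : H →ₗ[ℂ] H))]
    (hPdom : ∀ v ∈ LinearMap.range (P : H →ₗ[ℂ] H), v ∈ D ∧ M v ∈ D)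
    (z : ℂ)
    (hz : 3 * max (max ‖LinearMap.toContinuousLinearMap (compress P (M ∘ₗ M))‖
        ‖LinearMap.toContinuousLinearMap (compress P M)‖) 1 < ‖z‖) :
    ∃ S : ↥(LinearMap.range (P : H →ₗ[ℂ] H)) →L[ℂ] ↥(LinearMap.range (P : H →ₗ[ℂ] H)),
      (∀ v, S (compress P (sqz M z) v) = v) ∧
      (∀ v, compress P (sqz M z) (S v) = v) ∧
      ‖S‖ ≤ (9 / 2) / ‖z‖ ^ 2 := by
  have := FiniteDimensional.complete ℂ (LinearMap.range (P : H →ₗ[ℂ] H))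
  obtain ⟨z_pos, hAz, hBz⟩ := le_of_three_mul_max_lt hz
  exact norm_inv_compression_le_general hPidem rfl rfl (norm_pos_iff.mp z_pos) hAz hBz

end
end

section
/- Let M be a bounded self-adjoint operator on a complex Hilbert space H and (P_n) orthogonal projections with n-dimensional ranges L_n such that P_n x → x for all x ∈ H. Then Λ ⊆ Σ: if z ∈ ℂ is such that there exist z_n ∈ Spec₂(M|L_n) with z_n → z, then σ_n(z) → 0 as n → ∞. -/
open Filter Topology

noncomputable section

variable {H : Type*} [NormedAddCommGroup H] [InnerProductSpace ℂ H] [CompleteSpace H]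

/-!
If `w` is in the second order spectrum, finite dimensionality gives a nonzero `v` in the range of
`P` with `P (M - w)² v = 0`.  Since `(M - z)² - (M - w)² = (w - z) (2 M - (z + w))`, this `v`
satisfies `‖P (M - z)² v‖ = O(‖w - z‖) ‖v‖`, with a constant depending only on bounds for `‖P‖`,
`‖M‖` and `‖z + w‖`.
-/

section SecondOrder

variable {E : Type*} [NormedAddCommGroup E] [InnerProductSpace ℂ E]

lemma mem_spec2_iff_exists_ne_zero {M : E →ₗ[ℂ] E} {P : E →L[ℂ] E}
    [FiniteDimensional ℂ (LinearMap.range (P : E →ₗ[ℂ] E))] {z : ℂ} :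
    z ∈ spec2 M P ↔
      ∃ v ∈ LinearMap.range (P : E →ₗ[ℂ] E), v ≠ 0 ∧ P (sqz M z v) = 0 := by
  have bijective_iff_injective : Function.Bijective (compress P (sqz M z)) ↔
      Function.Injective (compress P (sqz M z)) :=
    ⟨And.left, fun h => ⟨h, LinearMap.surjective_of_injective h⟩⟩
  rw [spec2, Set.mem_ofPred_eq, bijective_iff_injective, injective_iff_map_eq_zero]
  push Not
  constructor
  · rintro ⟨⟨v, hv⟩, hker, hne⟩
    exact ⟨v, hv, fun h => hne (Subtype.ext h), congrArg Subtype.val hker⟩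
  · rintro ⟨v, hv, hne, hker⟩
    exact ⟨⟨v, hv⟩, Subtype.ext hker, fun h => hne (congrArg Subtype.val h)⟩

lemma sigma2_nonneg (M : E →ₗ[ℂ] E) (P : E →L[ℂ] E) (z : ℂ) : 0 ≤ sigma2 M P z := by
  refine Real.sInf_nonneg ?_
  rintro _ ⟨v, -, -, rfl⟩
  positivity

lemma sigma2_le_div_norm (M : E →ₗ[ℂ] E) {P : E →L[ℂ] E} (z : ℂ) {v : E}
    (hv : v ∈ LinearMap.range (P : E →ₗ[ℂ] E)) (hv0 : v ≠ 0) :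
    sigma2 M P z ≤ ‖P (sqz M z v)‖ / ‖v‖ := by
  refine csInf_le ⟨0, ?_⟩ ⟨v, hv, hv0, rfl⟩
  rintro _ ⟨u, -, -, rfl⟩
  positivity

lemma sqz_sub_sqz (M : E →ₗ[ℂ] E) (z w : ℂ) :
    sqz M z - sqz M w = (w - z) • ((2 : ℂ) • M - (z + w) • LinearMap.id) := by
  ext v
  simp only [sqz, LinearMap.comp_apply, LinearMap.sub_apply, LinearMap.smul_apply,
    LinearMap.id_apply, map_sub, map_smul]
  module

lemma norm_sqz_sub_sqz_apply_le (M : E →L[ℂ] E) (z w : ℂ) (v : E) :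
    ‖sqz (M : E →ₗ[ℂ] E) z v - sqz (M : E →ₗ[ℂ] E) w v‖ ≤
      ‖w - z‖ * (2 * ‖M‖ + ‖z + w‖) * ‖v‖ := by
  have hdiff : sqz (M : E →ₗ[ℂ] E) z v - sqz (M : E →ₗ[ℂ] E) w v =
      (w - z) • ((2 : ℂ) • M v - (z + w) • v) :=
    LinearMap.congr_fun (sqz_sub_sqz (M : E →ₗ[ℂ] E) z w) v
  calc ‖sqz (M : E →ₗ[ℂ] E) z v - sqz (M : E →ₗ[ℂ] E) w v‖
      = ‖w - z‖ * ‖(2 : ℂ) • M v - (z + w) • v‖ := by rw [hdiff, norm_smul]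
    _ ≤ ‖w - z‖ * (2 * ‖M v‖ + ‖z + w‖ * ‖v‖) := by
        gcongr
        simpa only [norm_smul, Complex.norm_ofNat] using norm_sub_le ((2 : ℂ) • M v) ((z + w) • v)
    _ ≤ ‖w - z‖ * (2 * (‖M‖ * ‖v‖) + ‖z + w‖ * ‖v‖) := by
        gcongr
        exact M.le_opNorm v
    _ = ‖w - z‖ * (2 * ‖M‖ + ‖z + w‖) * ‖v‖ := by ring

lemma sigma2_le_of_mem_spec2 {M P : E →L[ℂ] E}
    [FiniteDimensional ℂ (LinearMap.range (P : E →ₗ[ℂ] E))] {w : ℂ}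
    (hw : w ∈ spec2 (M : E →ₗ[ℂ] E) P) (z : ℂ) :
    sigma2 (M : E →ₗ[ℂ] E) P z ≤ ‖P‖ * (‖w - z‖ * (2 * ‖M‖ + ‖z + w‖)) := by
  obtain ⟨v, hv, hv0, hker⟩ := mem_spec2_iff_exists_ne_zero.1 hw
  refine (sigma2_le_div_norm _ z hv hv0).trans ((div_le_iff₀ (norm_pos_iff.2 hv0)).2 ?_)
  calc ‖P (sqz (M : E →ₗ[ℂ] E) z v)‖
      = ‖P (sqz (M : E →ₗ[ℂ] E) z v - sqz (M : E →ₗ[ℂ] E) w v)‖ := by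
        rw [map_sub, hker, sub_zero]
    _ ≤ ‖P‖ * (‖w - z‖ * (2 * ‖M‖ + ‖z + w‖) * ‖v‖) :=
        P.le_opNorm_of_le (norm_sqz_sub_sqz_apply_le M z w v)
    _ = ‖P‖ * (‖w - z‖ * (2 * ‖M‖ + ‖z + w‖)) * ‖v‖ := (mul_assoc _ _ _).symm

theorem limit_of_spec2_mem_Sigma_general {ι : Type*} {l : Filter ι}
    (M : E →L[ℂ] E) {P : ι → E →L[ℂ] E}
    (hPfin : ∀ᶠ i in l, FiniteDimensional ℂ (LinearMap.range (P i : E →ₗ[ℂ] E)))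
    (hPbdd : IsBoundedUnder (· ≤ ·) l fun i => ‖P i‖)
    {z : ℂ} {zs : ι → ℂ} (hzs : ∀ᶠ i in l, zs i ∈ spec2 (M : E →ₗ[ℂ] E) (P i))
    (hlim : Tendsto zs l (𝓝 z)) :
    Tendsto (fun i => sigma2 (M : E →ₗ[ℂ] E) (P i) z) l (𝓝 0) := by
  have hdist : Tendsto (fun i => ‖zs i - z‖) l (𝓝 0) :=
    tendsto_iff_norm_sub_tendsto_zero.1 hlim
  have hfactor : Tendsto (fun i => ‖zs i - z‖ * (2 * ‖M‖ + ‖z + zs i‖)) l (𝓝 0) := by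
    simpa only [zero_mul] using hdist.mul ((hlim.const_add z).norm.const_add (2 * ‖M‖))
  have hbound : Tendsto (fun i => ‖P i‖ * (‖zs i - z‖ * (2 * ‖M‖ + ‖z + zs i‖))) l (𝓝 0) :=
    isBoundedUnder_le_mul_tendsto_zero (by simpa only [Function.comp_def, norm_norm]) hfactor
  refine squeeze_zero' (.of_forall fun i => sigma2_nonneg _ _ z) ?_ hbound
  filter_upwards [hPfin, hzs] with i _ hi
  exact sigma2_le_of_mem_spec2 hi z

end SecondOrder

/-- For a bounded self-adjoint operator, `Λ ⊆ Σ`:  if `z_n ∈ Spec₂(M|L_n)` and `z_n → z`,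
then `σ_n(z) → 0`. -/
theorem limit_of_spec2_mem_Sigma
    (M : H →L[ℂ] H) (hM : IsSelfAdjoint M)
    (P : ℕ → H →L[ℂ] H)
    (hPsa : ∀ n, IsSelfAdjoint (P n))
    (hPidem : ∀ n, IsIdempotentElem (P n))
    (hPfin : ∀ n, FiniteDimensional ℂ (LinearMap.range (P n : H →ₗ[ℂ] H)))
    (hPdim : ∀ n, Module.finrank ℂ (LinearMap.range (P n : H →ₗ[ℂ] H)) = n)
    (hPlim : ∀ x : H, Tendsto (fun n => P n x) atTop (𝓝 x))
    (z : ℂ) (zs : ℕ → ℂ)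
    (hzs : ∀ n, 1 ≤ n → zs n ∈ spec2 (M : H →ₗ[ℂ] H) (P n))
    (hlim : Tendsto zs atTop (𝓝 z)) :
    Tendsto (fun n => sigma2 (M : H →ₗ[ℂ] H) (P n) z) atTop (𝓝 0) := by
  have hPnorm : ∀ n, ‖P n‖ ≤ 1 := fun n => IsStarProjection.norm_le (P n) ⟨hPidem n, hPsa n⟩
  exact limit_of_spec2_mem_Sigma_general M (.of_forall hPfin) (isBoundedUnder_of ⟨1, hPnorm⟩)
    ((eventually_ge_atTop 1).mono hzs) hlim

end
end

section
/- Let M be a self-adjoint operator on a complex Hilbert space H and L_n ⊆ Dom(M²) finite-dimensional subspaces with orthogonal projections P_n. If λ ∈ ℝ and λ ∉ Spec M, then there exists b > 0, independent of n, such that σ_n(λ) ≥ b for all n; consequently Σ ∩ ℝ ⊆ Spec M. (In particular, dist(λ, Spec M)² is such a lower bound, since the numerical range of P_n(M−λ)²|L_n is contained in the numerical range of (M−λ)² ⊆ [dist(λ, Spec M)², ∞).) -/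
open Filter Topology

noncomputable section

variable {H : Type*} [NormedAddCommGroup H] [InnerProductSpace ℂ H] [CompleteSpace H]

/-!
For real `λ`, symmetry of `M` turns the quadratic form of the truncated operator into
`⟪P (M - λ)² v, v⟫ = ‖(M - λ) v‖²` on the range of `P`. A bounded resolvent at `λ` gives
`c ‖v‖ ≤ ‖(M - λ) v‖` on the domain with some `c > 0`, so Cauchy–Schwarz yields
`‖P (M - λ)² v‖ ≥ c² ‖v‖` with a constant which does not see the subspace.
-/

section Symmetric

variable {𝕜 E : Type*} [RCLike 𝕜] [SeminormedAddCommGroup E] [InnerProductSpace 𝕜 E]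

theorem inner_sub_real_smul_left_eq_right {M : E → E} {u v : E}
    (hM : inner 𝕜 (M u) v = inner 𝕜 u (M v)) (l : ℝ) :
    inner 𝕜 (M u - (l : 𝕜) • u) v = inner 𝕜 u (M v - (l : 𝕜) • v) := by
  rw [inner_sub_left, inner_sub_right, hM, inner_smul_left, inner_smul_right, RCLike.conj_ofReal]

theorem mul_norm_le_norm_apply_of_isSymmetricProjection {P : E →ₗ[𝕜] E}
    (hP : P.IsSymmetricProjection) {a : ℝ} {x v : E} (hv : v ∈ LinearMap.range P)
    (h : a * ‖v‖ ^ 2 ≤ RCLike.re (inner 𝕜 x v)) : a * ‖v‖ ≤ ‖P x‖ := by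
  obtain hv0 | hv0 := (norm_nonneg v).eq_or_lt'
  · simp [hv0]
  have hPv : P v = v := (LinearMap.IsIdempotentElem.mem_range_iff hP.isIdempotentElem).mp hv
  refine le_of_mul_le_mul_right ?_ hv0
  calc a * ‖v‖ * ‖v‖ = a * ‖v‖ ^ 2 := by ring
    _ ≤ RCLike.re (inner 𝕜 x v) := h
    _ = RCLike.re (inner 𝕜 (P x) v) := by rw [hP.isSymmetric x v, hPv]
    _ ≤ ‖P x‖ * ‖v‖ := re_inner_le_norm (P x) v

end Symmetric

section Compression

variable {E : Type*} [NormedAddCommGroup E] [InnerProductSpace ℂ E]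
  {D : Submodule ℂ E} {M : E →ₗ[ℂ] E}

theorem inner_sqz_left_eq_inner_sub_smul
    (hsym : ∀ u ∈ D, ∀ v ∈ D, (inner ℂ (M u) v : ℂ) = inner ℂ u (M v))
    {u v : E} (hu : u ∈ D) (hMu : M u ∈ D) (hv : v ∈ D) (l : ℝ) :
    (inner ℂ (sqz M (l : ℂ) u) v : ℂ) = inner ℂ (M u - (l : ℂ) • u) (M v - (l : ℂ) • v) :=
  inner_sub_real_smul_left_eq_right (hsym _ (D.sub_mem hMu (D.smul_mem _ hu)) v hv) l

theorem le_sigma2_of_mul_norm_sq_le_re_inner {P : E →L[ℂ] E}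
    (hP : (P : E →ₗ[ℂ] E).IsSymmetricProjection)
    (hne : LinearMap.range (P : E →ₗ[ℂ] E) ≠ ⊥) {z : ℂ} {a : ℝ}
    (h : ∀ v ∈ LinearMap.range (P : E →ₗ[ℂ] E),
      a * ‖v‖ ^ 2 ≤ RCLike.re (inner ℂ (sqz M z v) v)) :
    a ≤ sigma2 M P z := by
  obtain ⟨w, hw, hw0⟩ := Submodule.exists_mem_ne_zero_of_ne_bot hne
  refine le_csInf ⟨_, w, hw, hw0, rfl⟩ ?_
  rintro _ ⟨v, hv, hv0, rfl⟩
  rw [le_div_iff₀ (norm_pos_iff.mpr hv0)]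
  exact mul_norm_le_norm_apply_of_isSymmetricProjection hP hv (h v hv)

theorem exists_mul_norm_le_norm_sub_smul_of_not_mem_pspec {z : ℂ} (hz : z ∉ pspec D M) :
    ∃ c > 0, ∀ v ∈ D, c * ‖v‖ ≤ ‖M v - z • v‖ := by
  obtain ⟨R, hR, -⟩ := not_not.mp hz
  obtain ⟨C, hC, hbound⟩ := R.bound
  refine ⟨C⁻¹, inv_pos.mpr hC, fun v hv => ?_⟩
  rw [inv_mul_le_iff₀ hC]
  simpa only [hR v hv] using hbound (M v - z • v)

theorem sigma_bounded_below_of_not_mem_spectrum_general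
    (hsym : ∀ u ∈ D, ∀ v ∈ D, (inner ℂ (M u) v : ℂ) = inner ℂ u (M v))
    {ι : Type*} {P : ι → E →L[ℂ] E}
    (hP : ∀ i, (P i : E →ₗ[ℂ] E).IsSymmetricProjection)
    (hPne : ∀ i, LinearMap.range (P i : E →ₗ[ℂ] E) ≠ ⊥)
    (hPdom : ∀ i, ∀ v ∈ LinearMap.range (P i : E →ₗ[ℂ] E), v ∈ D ∧ M v ∈ D)
    {l c : ℝ} (hc : 0 < c) (hbelow : ∀ v ∈ D, c * ‖v‖ ≤ ‖M v - (l : ℂ) • v‖)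
    (F : Filter ι) [F.NeBot] :
    (∀ i, c ^ 2 ≤ sigma2 M (P i) (l : ℂ)) ∧
    ¬ Tendsto (fun i => sigma2 M (P i) (l : ℂ)) F (𝓝 0) := by
  have hsigma (i : ι) : c ^ 2 ≤ sigma2 M (P i) (l : ℂ) := by
    refine le_sigma2_of_mul_norm_sq_le_re_inner (hP i) (hPne i) fun v hv => ?_
    obtain ⟨hvD, hMvD⟩ := hPdom i v hv
    calc c ^ 2 * ‖v‖ ^ 2 = (c * ‖v‖) ^ 2 := (mul_pow c ‖v‖ 2).symm
      _ ≤ ‖M v - (l : ℂ) • v‖ ^ 2 := by gcongr; exact hbelow v hvD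
      _ = RCLike.re (inner ℂ (sqz M (l : ℂ) v) v) := by
        rw [inner_sqz_left_eq_inner_sub_smul hsym hvD hMvD hvD, inner_self_eq_norm_sq]
  exact ⟨hsigma, fun hlim => (ge_of_tendsto' hlim hsigma).not_gt (pow_pos hc 2)⟩

end Compression

/-- If `λ ∈ ℝ` and `λ ∉ Spec M`, then there is `b > 0` independent of `n` with
`σ_n(λ) ≥ b` for all `n`; consequently `λ ∉ Σ`, i.e. `Σ ∩ ℝ ⊆ Spec M`. -/
theorem sigma_bounded_below_of_not_mem_spectrum
    (D : Submodule ℂ H) (M : H →ₗ[ℂ] H)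
    -- `M` restricted to `D` is a (densely defined) self-adjoint operator:
    (hdense : Dense (D : Set H))
    (hsym : ∀ u ∈ D, ∀ v ∈ D, (inner ℂ (M u) v : ℂ) = inner ℂ u (M v))
    (hsa : ∀ x y : H, (∀ u ∈ D, (inner ℂ (M u) x : ℂ) = inner ℂ u y) → x ∈ D ∧ M x = y)
    -- `P n` is an orthogonal projection with finite-dimensional nontrivial range `⊆ Dom M²`:
    (P : ℕ → H →L[ℂ] H)
    (hPsa : ∀ n, IsSelfAdjoint (P n))
    (hPidem : ∀ n, IsIdempotentElem (P n))
    (hPfin : ∀ n, FiniteDimensional ℂ (LinearMap.range (P n : H →ₗ[ℂ] H)))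
    (hPne : ∀ n, LinearMap.range (P n : H →ₗ[ℂ] H) ≠ ⊥)
    (hPdom : ∀ n, ∀ v ∈ LinearMap.range (P n : H →ₗ[ℂ] H), v ∈ D ∧ M v ∈ D)
    (l : ℝ) (hl : (l : ℂ) ∉ pspec D M) :
    (∃ b > 0, ∀ n, b ≤ sigma2 M (P n) (l : ℂ)) ∧
    ¬ Tendsto (fun n => sigma2 M (P n) (l : ℂ)) atTop (𝓝 0) := by
  obtain ⟨c, hc, hbelow⟩ := exists_mul_norm_le_norm_sub_smul_of_not_mem_pspec hl
  have hP (n : ℕ) := ContinuousLinearMap.IsStarProjection.isSymmetricProjection ⟨hPidem n, hPsa n⟩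
  obtain ⟨hsigma, hlim⟩ :=
    sigma_bounded_below_of_not_mem_spectrum_general hsym hP hPne hPdom hc hbelow atTop
  exact ⟨⟨c ^ 2, pow_pos hc 2, hsigma⟩, hlim⟩

end
end
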